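/- Let φ : ℝ → ℝ be a C^∞ sigmoid (0 < φ < 1, φ′ > 0, φ(z) → 1 as z → +∞, φ(z) → 0 as z → −∞) satisfying the algebraic-decay assumption (A) with decay rate k, and fix α ∈ (0,1), α + β > 1. Then there exist real numbers η^L₀ < 0 < η^R₀ such that: for every μ₁ ≥ 0 and every η₁ with η^L₀ + μ₁/α < η₁ < η^R₀ + μ₁/(α+β), and for every c > 0, there exists ε₀ > 0 such that for all ε ∈ (0, ε₀) the planar system ẋ = (α + β φ((x−1)/ε)) y − x, ẏ = η − (μ + α + β φ((x−1)/ε)) y with η = 1 + ε^{k/(k+1)} η₁ and μ = ε^{k/(k+1)} μ₁ has an attracting limit cycle (a nonconstant periodic solution that attracts all solutions starting in some open neighborhood of its image) whose image lies within Hausdorff distance c of the singular cycle Γ₀. -/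

import Mathlib

open Filter Topology

/-- The substrate-depletion vector field
`(x, y) ↦ ((α + βφ((x−1)/ε))y − x, η − (μ + α + βφ((x−1)/ε))y)`. -/
noncomputable def sdVF (φ : ℝ → ℝ) (α β μ η ε : ℝ) (p : ℝ × ℝ) : ℝ × ℝ :=
  ((α + β * φ ((p.1 - 1) / ε)) * p.2 - p.1,
   η - (μ + α + β * φ ((p.1 - 1) / ε)) * p.2)

namespace SDO

open Set

lemma boot {f : ℝ → ℝ} {a b : ℝ} (hc : ContinuousOn f (Icc a b)) (h0 : 0 < f a)
    (H : ∀ t ∈ Ioc a b, (∀ s ∈ Icc a t, 0 ≤ f s) → (∀ s ∈ Ico a t, 0 < f s) → 0 < f t) :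
    ∀ t ∈ Icc a b, 0 < f t := by
  by_contra hcon
  push Not at hcon
  obtain ⟨t, ht, hft⟩ := hcon
  set S := Icc a b ∩ f ⁻¹' (Iic 0) with hS
  have hSc : IsClosed S := hc.preimage_isClosed_of_isClosed isClosed_Icc isClosed_Iic
  have hne : S.Nonempty := ⟨t, ht, hft⟩
  have hbd : BddBelow S := ⟨a, fun x hx => hx.1.1⟩
  have hm := hSc.csInf_mem hne hbd
  set m := sInf S
  have hma : a < m := by
    rcases lt_or_eq_of_le hm.1.1 with h | h
    · exact h
    · have := hm.2; simp only [mem_preimage, mem_Iic] at this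
      rw [← h] at this; linarith
  have hpos : ∀ s ∈ Ico a m, 0 < f s := by
    intro s hs
    by_contra hns
    have : s ∈ S := ⟨⟨hs.1, hs.2.le.trans hm.1.2⟩, not_lt.1 hns⟩
    exact absurd (csInf_le hbd this) (not_le.2 hs.2)
  have hmnn : 0 ≤ f m := by
    have hcw : ContinuousWithinAt f (Icc a b) m := hc m hm.1
    have hcw2 : Tendsto f (𝓝[Ioo a m] m) (𝓝 (f m)) :=
      hcw.mono (fun s hs => ⟨hs.1.le, hs.2.le.trans hm.1.2⟩)
    have : (𝓝[Ioo a m] m).NeBot := right_nhdsWithin_Ioo_neBot hma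
    refine ge_of_tendsto hcw2 ?_
    filter_upwards [self_mem_nhdsWithin] with s hs
    exact (hpos s ⟨hs.1.le, hs.2⟩).le
  have := H m ⟨hma, hm.1.2⟩ (fun s hs => by
    rcases lt_or_eq_of_le hs.2 with h | h
    · exact (hpos s ⟨hs.1, h⟩).le
    · rw [h]; exact hmnn) hpos
  exact absurd hm.2 (by simpa using this)

lemma barrier {f f' : ℝ → ℝ} {a b : ℝ} (hd : ∀ t ∈ Icc a b, HasDerivAt f (f' t) t) (h0 : 0 < f a)
    (H : ∀ t ∈ Ioc a b, f t = 0 → (∀ s ∈ Ico a t, 0 < f s) → 0 < f' t) :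
    ∀ t ∈ Icc a b, 0 < f t := by
  refine boot (fun t ht => (hd t ht).continuousAt.continuousWithinAt) h0 ?_
  intro t ht hnn hpos
  rcases lt_or_eq_of_le (hnn t ⟨ht.1.le, le_rfl⟩) with h | h
  · exact h
  exfalso
  have hp := H t ht h.symm hpos
  have hs := (hasDerivAt_iff_tendsto_slope.1 (hd t ⟨ht.1.le, ht.2⟩))
  have hev : ∀ᶠ s in 𝓝[≠] t, 0 < slope f t s := hs.eventually (lt_mem_nhds hp)
  have hev2 : ∀ᶠ s in 𝓝[<] t, 0 < slope f t s :=
    hev.filter_mono (nhdsWithin_mono _ (fun s hs => ne_of_lt hs))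
  have hev3 : ∀ᶠ s in 𝓝[<] t, s ∈ Ioo a t := Ioo_mem_nhdsLT ht.1
  obtain ⟨s, hs1, hs2⟩ := (hev2.and hev3).exists
  rw [slope_def_field, ← h] at hs1
  have h1 := hpos s ⟨hs2.1.le, hs2.2⟩
  have : (f s - 0) / (s - t) < 0 := div_neg_of_pos_of_neg (by linarith) (by linarith [hs2.2])
  linarith

/-- first hitting of level `c` from above -/
lemma firsthit {f : ℝ → ℝ} {a b c : ℝ} (hc : ContinuousOn f (Icc a b)) (h0 : c < f a)
    (h1 : ∃ t ∈ Icc a b, f t ≤ c) :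
    ∃ t ∈ Ioc a b, f t = c ∧ ∀ s ∈ Ico a t, c < f s := by
  by_contra hcon
  push Not at hcon
  have : ∀ t ∈ Icc a b, 0 < f t - c := by
    refine boot (hc.sub continuousOn_const) (by simpa using h0) ?_
    intro t ht hnn hpos
    rcases lt_or_eq_of_le (hnn t ⟨ht.1.le, le_rfl⟩) with h | h
    · exact h
    · obtain ⟨s, hs, hsc⟩ := hcon t ht (by linarith)
      linarith [hpos s hs]
  obtain ⟨t, ht, h⟩ := h1
  linarith [this t ht]

lemma mono_of {f f' : ℝ → ℝ} {a b : ℝ} (hab : a ≤ b) (hc : ContinuousOn f (Icc a b))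
    (hd : ∀ t ∈ Ioo a b, HasDerivAt f (f' t) t) (h : ∀ t ∈ Ioo a b, 0 ≤ f' t) : f a ≤ f b := by
  have := monotoneOn_of_deriv_nonneg (convex_Icc a b) hc
    (by rw [interior_Icc]; exact fun t ht => (hd t ht).differentiableAt.differentiableWithinAt)
    (by rw [interior_Icc]; intro t ht; rw [(hd t ht).deriv]; exact h t ht)
  exact this ⟨le_rfl, hab⟩ ⟨hab, le_rfl⟩ hab

lemma mono_of' {f f' : ℝ → ℝ} {a b : ℝ} (hab : a ≤ b)
    (hd : ∀ t ∈ Icc a b, HasDerivAt f (f' t) t) (h : ∀ t ∈ Icc a b, 0 ≤ f' t) : f a ≤ f b :=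
  mono_of hab (fun t ht => (hd t ht).continuousAt.continuousWithinAt)
    (fun t ht => hd t (Ioo_subset_Icc_self ht)) (fun t ht => h t (Ioo_subset_Icc_self ht))

lemma anti_of' {f f' : ℝ → ℝ} {a b : ℝ} (hab : a ≤ b)
    (hd : ∀ t ∈ Icc a b, HasDerivAt f (f' t) t) (h : ∀ t ∈ Icc a b, f' t ≤ 0) : f b ≤ f a := by
  have := mono_of' (f := fun t => - f t) (f' := fun t => - f' t) hab
    (fun t ht => (hd t ht).neg) (fun t ht => by linarith [h t ht])
  linarith

/-- growth: `f' ≤ K f + ω`. -/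
lemma gron {f f' : ℝ → ℝ} {a b K ω : ℝ} (hab : a ≤ b) (hK : 1 ≤ K) (hω : 0 ≤ ω)
    (hd : ∀ t ∈ Icc a b, HasDerivAt f (f' t) t) (h : ∀ t ∈ Icc a b, f' t ≤ K * f t + ω) :
    f b ≤ (f a + ω) * Real.exp (K * (b - a)) := by
  have key := anti_of' (f := fun t => (f t + ω) * Real.exp (-(K * (t - a))))
    (f' := fun t => f' t * Real.exp (-(K * (t - a))) +
      (f t + ω) * (Real.exp (-(K * (t - a))) * (-(K * 1)))) hab
    (fun t ht => by
      have h1 := (hd t ht).add_const ω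
      have h2 : HasDerivAt (fun t : ℝ => Real.exp (-(K * (t - a))))
          (Real.exp (-(K * (t - a))) * (-(K * 1))) t :=
        ((((hasDerivAt_id t).sub_const a).const_mul K).neg).exp
      exact h1.mul h2)
    (fun t ht => by
      have h1 := h t ht
      have h2 := Real.exp_pos (-(K * (t - a)))
      have : f' t * Real.exp (-(K * (t - a))) +
        (f t + ω) * (Real.exp (-(K * (t - a))) * (-(K * 1)))
        = (f' t - K * f t - K * ω) * Real.exp (-(K * (t - a))) := by ring
      rw [this]
      apply mul_nonpos_of_nonpos_of_nonneg _ h2.le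
      nlinarith)
  simp only [sub_self, mul_zero, neg_zero, Real.exp_zero, mul_one] at key
  have h2 := Real.exp_pos (K * (b - a))
  have h3 : Real.exp (-(K * (b - a))) * Real.exp (K * (b - a)) = 1 := by
    rw [← Real.exp_add]; simp
  have : f b + ω = ((f b + ω) * Real.exp (-(K * (b - a)))) * Real.exp (K * (b - a)) := by
    rw [mul_assoc, h3, mul_one]
  nlinarith [mul_le_mul_of_nonneg_right key h2.le]

/-- backwards growth: `D' ≥ -K D`. -/
lemma gron_back {D D' : ℝ → ℝ} {a b K : ℝ} (hab : a ≤ b) (hc : ContinuousOn D (Icc a b))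
    (hd : ∀ t ∈ Ioo a b, HasDerivAt D (D' t) t) (h : ∀ t ∈ Ioo a b, - K * D t ≤ D' t) :
    D a ≤ D b * Real.exp (K * (b - a)) := by
  have key := mono_of (f := fun t => D t * Real.exp (K * (t - a)))
    (f' := fun t => D' t * Real.exp (K * (t - a)) +
      D t * (Real.exp (K * (t - a)) * (K * 1))) hab
    (hc.mul (by fun_prop))
    (fun t ht => by
      have h2 : HasDerivAt (fun t : ℝ => Real.exp (K * (t - a)))
          (Real.exp (K * (t - a)) * (K * 1)) t :=
        ((((hasDerivAt_id t).sub_const a).const_mul K)).exp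
      exact (hd t ht).mul h2)
    (fun t ht => by
      have h1 := h t ht
      have h2 := Real.exp_pos (K * (t - a))
      have : D' t * Real.exp (K * (t - a)) +
        D t * (Real.exp (K * (t - a)) * (K * 1))
        = (D' t + K * D t) * Real.exp (K * (t - a)) := by ring
      rw [this]
      apply mul_nonneg _ h2.le
      linarith)
  simpa using key

/-- power contraction: `D' ≥ λ D / x`. -/
lemma pow_contr {D D' : ℝ → ℝ} {a b l : ℝ} (ha : 0 < a) (hab : a ≤ b)
    (hc : ContinuousOn D (Icc a b))
    (hd : ∀ t ∈ Ioo a b, HasDerivAt D (D' t) t) (h : ∀ t ∈ Ioo a b, l * D t / t ≤ D' t) :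
    D a ≤ D b * (a / b) ^ l := by
  have hb : 0 < b := ha.trans_le hab
  have key := mono_of (f := fun t => D t * t ^ (-l))
    (f' := fun t => D' t * t ^ (-l) + D t * (-l * t ^ (-l - 1))) hab
    (hc.mul (fun t ht => (Real.continuousAt_rpow_const t (-l)
      (Or.inl (ha.trans_le ht.1).ne')).continuousWithinAt))
    (fun t ht => by
      have ht0 : 0 < t := ha.trans ht.1
      exact (hd t ht).mul (Real.hasDerivAt_rpow_const (Or.inl ht0.ne')))
    (fun t ht => by
      have ht0 : 0 < t := ha.trans ht.1
      have h1 := h t ht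
      have h2 := Real.rpow_pos_of_pos ht0 (-l)
      rw [Real.rpow_sub_one ht0.ne']
      have : D' t * t ^ (-l) + D t * (-l * (t ^ (-l) / t)) = (D' t - l * D t / t) * t ^ (-l) := by
        ring
      rw [this]
      exact mul_nonneg (by linarith) h2.le)
  rw [Real.rpow_neg ha.le, Real.rpow_neg hb.le] at key
  rw [Real.div_rpow ha.le hb.le]
  have h1 := Real.rpow_pos_of_pos ha l
  have h2 := Real.rpow_pos_of_pos hb l
  have h3 := mul_le_mul_of_nonneg_right key h1.le
  rw [mul_assoc, inv_mul_cancel₀ h1.ne', mul_one] at h3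
  calc D a ≤ _ := h3
    _ = _ := by field_simp

/-- Inverse of a strictly decreasing curve. -/
lemma inverse {u N : ℝ → ℝ} {a b : ℝ} (hab : a ≤ b)
    (hd : ∀ t ∈ Icc a b, HasDerivAt u (- N t) t) (hN : ∀ t ∈ Icc a b, 0 < N t) :
    ∃ τ : ℝ → ℝ, (∀ x ∈ Icc (u b) (u a), τ x ∈ Icc a b ∧ u (τ x) = x) ∧
      (∀ t ∈ Icc a b, τ (u t) = t) ∧ ContinuousOn τ (Icc (u b) (u a)) ∧
      ∀ x ∈ Ioo (u b) (u a), HasDerivAt τ (- (N (τ x))⁻¹) x := by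
  have hc : ContinuousOn u (Icc a b) := fun t ht => (hd t ht).continuousAt.continuousWithinAt
  have hanti : StrictAntiOn u (Icc a b) := by
    apply strictAntiOn_of_deriv_neg (convex_Icc a b) hc
    rw [interior_Icc]
    intro t ht
    have ht' := Ioo_subset_Icc_self ht
    rw [(hd t ht').deriv]; linarith [hN t ht']
  have himg : ∀ x ∈ Icc (u b) (u a), ∃ t ∈ Icc a b, u t = x := by
    intro x hx
    exact intermediate_value_Icc' hab hc hx
  choose! τ hτ hτu using himg
  have hinv : ∀ t ∈ Icc a b, τ (u t) = t := by
    intro t ht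
    have hut : u t ∈ Icc (u b) (u a) :=
      ⟨hanti.antitoneOn ht ⟨hab, le_rfl⟩ ht.2, hanti.antitoneOn ⟨le_rfl, hab⟩ ht ht.1⟩
    exact hanti.injOn (hτ _ hut) ht (hτu _ hut)
  have hcont : ContinuousOn τ (Icc (u b) (u a)) := by
    rw [continuousOn_iff_isClosed]
    intro t ht
    refine ⟨u '' (t ∩ Icc a b), ?_, ?_⟩
    · have : IsCompact (t ∩ Icc a b) := by
        rw [inter_comm]; exact isCompact_Icc.inter_right ht
      exact (this.image_of_continuousOn (hc.mono inter_subset_right)).isClosed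
    · ext x
      constructor
      · rintro ⟨hx1, hx2⟩
        exact ⟨⟨τ x, ⟨hx1, hτ x hx2⟩, hτu x hx2⟩, hx2⟩
      · rintro ⟨⟨s, ⟨hs1, hs2⟩, rfl⟩, hx2⟩
        refine ⟨?_, hx2⟩
        simp only [mem_preimage]
        rw [hinv s hs2]; exact hs1
  refine ⟨τ, fun x hx => ⟨hτ x hx, hτu x hx⟩, hinv, hcont, ?_⟩
  intro x hx
  have hx' := Ioo_subset_Icc_self hx
  have hn : Icc (u b) (u a) ∈ 𝓝 x := Icc_mem_nhds hx.1 hx.2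
  have := HasDerivAt.of_local_left_inverse (f := u) (g := τ) (f' := - N (τ x)) (a := x)
    (hcont.continuousAt hn) (hd _ (hτ x hx')) (neg_ne_zero.2 (hN _ (hτ x hx')).ne')
    (by filter_upwards [hn] with y hy using hτu y hy)
  rwa [neg_inv]

end SDO

namespace SDO

open Set

structure HS where
  g0 : ℝ
  σ : ℝ
  gm : ℝ
  gM : ℝ
  ym : ℝ
  yM : ℝ
  c1 : ℝ
  c2 : ℝ
  L : ℝ
  v0 : ℝ
  k : ℕ
  R : ℝ → ℝ
  R' : ℝ → ℝ
  gu : ℝ → ℝ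
  gv : ℝ → ℝ
  hk : 1 ≤ k
  hg0 : 0 < g0
  hσ : σ = 1 ∨ σ = -1
  hgm : 0 < gm
  hym : 0 < ym
  hyM : ym ≤ yM
  hc1 : 0 < c1
  hc2 : 0 < c2
  hL : 0 ≤ L
  hv0 : 0 < v0
  hR : ∀ z, HasDerivAt R (R' z) z
  hR' : ∀ z, R' z ≤ 0
  hRpos : ∀ z, 0 < R z
  hg1 : ∀ z, gm ≤ g0 - σ * R z
  hg2 : ∀ z, g0 - σ * R z ≤ gM
  hRlo : ∀ z, 1 ≤ z → c1 * (z⁻¹) ^ k ≤ R z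
  hRhi : ∀ z, 1 ≤ z → R z ≤ c2 * (z⁻¹) ^ k
  hRL : ∀ z1 z2, 1 ≤ z1 → 1 ≤ z2 → |R z1 - R z2| ≤ L * |z1⁻¹ - z2⁻¹|
  hgu : ∀ t, HasDerivAt gu (g0 * gv t - gu t) t
  hgv : ∀ t, HasDerivAt gv (-(g0 * gv t)) t
  hgu0 : gu 0 = 0
  hgv0 : gv 0 = v0
  hlimu : Tendsto gu atTop (𝓝 0)
  hlimv : Tendsto gv atTop (𝓝 0)

namespace HS
variable (S : HS)

noncomputable def y (v : ℝ) : ℝ := 1 / S.g0 + S.σ * v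
noncomputable def N (ε u v : ℝ) : ℝ := u + S.R (u / ε) * S.y v - S.g0 * v
noncomputable def M : ℝ := 2 + (1 + S.c2 * S.yM) / S.g0
noncomputable def n0 : ℝ := S.R 0 * S.ym / 2

structure Sol (ε e0 μ : ℝ) (u v : ℝ → ℝ) : Prop where
  hu : ∀ t, 0 ≤ t → HasDerivAt u (-(S.N ε (u t) (v t))) t
  hv : ∀ t, 0 ≤ t → HasDerivAt v (e0 - μ * v t - u t + S.N ε (u t) (v t)) t
  hy1 : ∀ t, 0 ≤ t → S.ym ≤ S.y (v t)
  hy2 : ∀ t, 0 ≤ t → S.y (v t) ≤ S.yM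

structure Par (ρ δ ε e0 μ : ℝ) : Prop where
  hρ : 0 < ρ
  hρ6 : ρ ≤ 1 / 6
  hρM : (S.g0 * S.M + 2) * (3 * ρ) ≤ S.c1 * S.ym
  hδ : 0 < δ
  hδ1 : δ ≤ 1
  hδg : δ ≤ S.g0
  hε : 0 < ε
  hεδ : ε ^ S.k = δ ^ (S.k + 1)
  hε3 : ε ≤ 3 * ρ * δ
  he0 : |e0| ≤ ρ * δ
  hμ0 : 0 ≤ μ
  hμ : μ ≤ ρ * δ

variable {S} {ρ δ ε e0 μ : ℝ} {u v : ℝ → ℝ}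

lemma hanti (S : HS) : Antitone S.R := by
  apply antitone_of_deriv_nonpos (fun z => (S.hR z).differentiableAt)
  intro z; rw [(S.hR z).deriv]; exact S.hR' z

lemma hyM0 (S : HS) : 0 < S.yM := S.hym.trans_le S.hyM

lemma Par.ratio (P : S.Par ρ δ ε e0 μ) : (ε / δ) ^ S.k = δ := by
  rw [div_pow, P.hεδ, pow_succ]
  have := pow_pos P.hδ S.k
  field_simp

lemma Par.εδ (P : S.Par ρ δ ε e0 μ) : ε ≤ δ := by
  have := P.hε3; have := P.hρ6; have := P.hδ
  nlinarith

lemma Par.Rhi (P : S.Par ρ δ ε e0 μ) {x : ℝ} (hx : δ ≤ x) : S.R (x / ε) ≤ S.c2 * δ := by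
  have h1 : 1 ≤ δ / ε := (one_le_div P.hε).2 P.εδ
  have h2 : δ / ε ≤ x / ε := div_le_div_of_nonneg_right hx P.hε.le
  calc S.R (x / ε) ≤ S.R (δ / ε) := S.hanti h2
    _ ≤ S.c2 * ((δ / ε)⁻¹) ^ S.k := S.hRhi _ h1
    _ = S.c2 * δ := by rw [inv_div, P.ratio]

lemma Par.Rlo (P : S.Par ρ δ ε e0 μ) {x : ℝ} (hx : x ≤ 3 * ρ * δ) :
    (S.g0 * S.M + 2) * δ ≤ S.R (x / ε) * S.ym := by
  have hρ := P.hρ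
  have hδ := P.hδ
  have h1 : 1 ≤ (3 * ρ * δ) / ε := (one_le_div P.hε).2 P.hε3
  have h2 : x / ε ≤ (3 * ρ * δ) / ε := div_le_div_of_nonneg_right hx P.hε.le
  have h3 : S.c1 * (((3 * ρ * δ) / ε)⁻¹) ^ S.k ≤ S.R (x / ε) := (S.hRlo _ h1).trans (S.hanti h2)
  have h4 : (((3 * ρ * δ) / ε)⁻¹) = (ε / δ) * (3 * ρ)⁻¹ := by
    rw [inv_div]; field_simp
  rw [h4, mul_pow, P.ratio] at h3
  have h5 : (3 * ρ)⁻¹ ≤ ((3 * ρ)⁻¹) ^ S.k := by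
    have : 1 ≤ (3 * ρ)⁻¹ := by
      rw [one_le_inv₀ (by positivity)]; linarith [P.hρ6]
    exact le_self_pow₀ this (by have := S.hk; omega)
  have h6 : S.c1 * (δ * (3 * ρ)⁻¹) ≤ S.R (x / ε) := by
    refine le_trans ?_ h3
    have := S.hc1
    gcongr
  have h7 : (S.g0 * S.M + 2) ≤ S.c1 * S.ym * (3 * ρ)⁻¹ := by
    rw [← div_eq_mul_inv, le_div_iff₀ (by positivity)]; exact P.hρM
  have hym := S.hym
  calc (S.g0 * S.M + 2) * δ ≤ S.c1 * S.ym * (3 * ρ)⁻¹ * δ := by gcongr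
    _ = S.c1 * (δ * (3 * ρ)⁻¹) * S.ym := by ring
    _ ≤ _ := by gcongr

lemma Sol.mono_ym (H : S.Sol ε e0 μ u v) {t : ℝ} (ht : 0 ≤ t) :
    0 < S.y (v t) := S.hym.trans_le (H.hy1 t ht)

lemma M_pos (S : HS) : 2 < S.M := by
  unfold M
  have := S.hg0; have := S.hc2; have := S.hyM0
  have : 0 < (1 + S.c2 * S.yM) / S.g0 := by positivity
  linarith

lemma Sol.vlow (H : S.Sol ε e0 μ u v) (P : S.Par ρ δ ε e0 μ) (h0 : 0 < v 0) :
    ∀ t, 0 ≤ t → - (2 * ρ * δ / S.g0) < v t := by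
  intro t ht
  have hg := S.hg0
  have hρ := P.hρ
  have hδ := P.hδ
  have hb : 0 < 2 * ρ * δ / S.g0 := by positivity
  set b := 2 * ρ * δ / S.g0 with hbdef
  have hgb : S.g0 * b = 2 * ρ * δ := by rw [hbdef]; field_simp
  have := barrier (f := fun s => v s + b) (a := 0) (b := t)
    (f' := fun s => e0 - μ * v s - u s + S.N ε (u s) (v s))
    (fun s hs => (H.hv s hs.1).add_const b) (by linarith)
    (fun s hs hz _ => by
      have hvs : v s = - b := by linarith
      have h1 := mul_pos (S.hRpos (u s / ε)) (H.mono_ym hs.1.le)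
      have h2 := abs_le.1 P.he0
      have h3 := mul_nonneg P.hμ0 hb.le
      unfold N
      have h4 : 0 < ρ * δ := by positivity
      rw [hvs] at h1 ⊢
      nlinarith) t ⟨ht, le_rfl⟩
  linarith

lemma Sol.e_le (P : S.Par ρ δ ε e0 μ) {x : ℝ}
    (h : - (2 * ρ * δ / S.g0) < x) : e0 - μ * x ≤ 3 / 2 * (ρ * δ) := by
  have h1 := abs_le.1 P.he0
  have hρ := P.hρ
  have hδ := P.hδ
  have hb : 2 * ρ * δ / S.g0 ≤ 1 / 3 := by
    rw [div_le_iff₀ S.hg0]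
    have := P.hρ6; have := P.hδg
    nlinarith
  have h2 := P.hμ0
  have h3 : - μ * x ≤ μ * (1 / 3) := by nlinarith
  have h4 := P.hμ
  nlinarith

lemma Sol.hw (H : S.Sol ε e0 μ u v) {t : ℝ} (ht : 0 ≤ t) :
    HasDerivAt (fun s => u s + v s) (e0 - μ * v t - u t) t := by
  have := (H.hu t ht).add (H.hv t ht)
  refine this.congr_deriv ?_
  ring

/-- derivative of `N` along a solution -/
lemma Sol.hN (H : S.Sol ε e0 μ u v) {t : ℝ} (ht : 0 ≤ t) :
    HasDerivAt (fun s => S.N ε (u s) (v s))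
      ((u t - (e0 - μ * v t)) * (S.g0 - S.σ * S.R (u t / ε))
        - S.N ε (u t) (v t) * (1 + S.R' (u t / ε) / ε * S.y (v t)
          + (S.g0 - S.σ * S.R (u t / ε)))) t := by
  have hu := H.hu t ht
  have hv := H.hv t ht
  have hR : HasDerivAt (fun s => S.R (u s / ε))
      (S.R' (u t / ε) * (-(S.N ε (u t) (v t)) / ε)) t :=
    (S.hR (u t / ε)).comp t (hu.div_const ε)
  have hy : HasDerivAt (fun s => S.y (v s))
      (S.σ * (e0 - μ * v t - u t + S.N ε (u t) (v t))) t :=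
    (hv.const_mul S.σ).const_add (1 / S.g0)
  have := (hu.add (hR.mul hy)).sub (hv.const_mul S.g0)
  refine this.congr_deriv ?_
  ring

lemma Sol.contN (H : S.Sol ε e0 μ u v) {a b : ℝ} (ha : 0 ≤ a) :
    ContinuousOn (fun s => S.N ε (u s) (v s)) (Icc a b) :=
  fun _ ht => (H.hN (ha.trans ht.1)).continuousAt.continuousWithinAt

lemma Sol.contu (H : S.Sol ε e0 μ u v) {a b : ℝ} (ha : 0 ≤ a) :
    ContinuousOn u (Icc a b) :=
  fun _ ht => (H.hu _ (ha.trans ht.1)).continuousAt.continuousWithinAt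

lemma Sol.contv (H : S.Sol ε e0 μ u v) {a b : ℝ} (ha : 0 ≤ a) :
    ContinuousOn v (Icc a b) :=
  fun _ ht => (H.hv _ (ha.trans ht.1)).continuousAt.continuousWithinAt

/-- `N>0` is preserved as long as `u ≥ 2ρδ`. -/
lemma Sol.Npos (H : S.Sol ε e0 μ u v) (P : S.Par ρ δ ε e0 μ) (hv0 : 0 < v 0) {a b : ℝ}
    (ha : 0 ≤ a) (hN : 0 < S.N ε (u a) (v a)) (hu : ∀ t ∈ Icc a b, 2 * ρ * δ ≤ u t) :
    ∀ t ∈ Icc a b, 0 < S.N ε (u t) (v t) := by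
  refine barrier (fun t ht => H.hN (ha.trans ht.1)) hN ?_
  intro t ht hz _
  have ht0 : 0 ≤ t := ha.trans ht.1.le
  have he := Sol.e_le P (H.vlow P hv0 t ht0)
  have h1 := hu t ⟨ht.1.le, ht.2⟩
  have h2 := mul_pos P.hρ P.hδ
  rw [hz, zero_mul, sub_zero]
  exact mul_pos (by linarith) (S.hgm.trans_le (S.hg1 _))

/-- first part of the descent -/
lemma Sol.desc1 (H : S.Sol ε e0 μ u v) (P : S.Par ρ δ ε e0 μ) (hv0 : 0 < v 0) {T0 : ℝ}
    (hT0 : 0 ≤ T0) (hN : 0 < S.N ε (u T0) (v T0)) (hu : δ < u T0) :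
    ∃ t1, T0 < t1 ∧ t1 ≤ T0 + 2 * (u T0 + v T0 + 1) / (ρ * δ) ∧ u t1 = 2 * ρ * δ ∧
      (∀ t ∈ Icc T0 t1, 2 * ρ * δ ≤ u t ∧ 0 < S.N ε (u t) (v t) ∧
        u t + v t ≤ u T0 + v T0) ∧ u t1 + v t1 ≤ (S.M - 1) * δ := by
  have hρ := P.hρ
  have hδ := P.hδ
  have hρδ := mul_pos hρ hδ
  have hρ6 := P.hρ6
  have hg := S.hg0
  have hb1 : 2 * ρ * δ / S.g0 ≤ 1 / 3 := by
    rw [div_le_iff₀ S.hg0]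
    have := P.hδg
    nlinarith
  have h2ρ : 2 * ρ * δ ≤ δ / 3 := by nlinarith
  have hvl := H.vlow P hv0
  set τ := 2 * (u T0 + v T0 + 1) / (ρ * δ) with hτ
  have hτ0 : 0 < τ := by
    have := hvl T0 hT0
    apply div_pos _ hρδ
    linarith
  have hwd : ∀ t, 0 ≤ t → 2 * ρ * δ ≤ u t → e0 - μ * v t - u t ≤ - (ρ * δ / 2) := by
    intro t ht h
    have := Sol.e_le P (hvl t ht)
    linarith
  have hex : ∃ t ∈ Icc T0 (T0 + τ), u t ≤ 2 * ρ * δ := by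
    by_contra hcon
    push Not at hcon
    have := anti_of' (f := fun t => (u t + v t) + ρ * δ / 2 * t)
      (f' := fun t => (e0 - μ * v t - u t) + ρ * δ / 2) (a := T0) (b := T0 + τ) (by linarith)
      (fun t ht => by
        have h1 := H.hw (hT0.trans ht.1)
        have h2 := (hasDerivAt_id t).const_mul (ρ * δ / 2)
        rw [mul_one] at h2
        exact h1.add h2)
      (fun t ht => by
        have := hwd t (hT0.trans ht.1) (hcon t ht).le
        linarith)
    have h2 : ρ * δ / 2 * τ = u T0 + v T0 + 1 := by rw [hτ]; field_simp
    have h3 := hcon (T0 + τ) ⟨by linarith, le_rfl⟩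
    have h4 := hvl (T0 + τ) (by linarith)
    nlinarith
  obtain ⟨t1, ht1, hut1, hpos⟩ := firsthit (H.contu hT0) (by linarith) hex
  have hge : ∀ t ∈ Icc T0 t1, 2 * ρ * δ ≤ u t := by
    intro t ht
    rcases lt_or_eq_of_le ht.2 with h | h
    · exact (hpos t ⟨ht.1, h⟩).le
    · rw [h, hut1]
  have hNp := H.Npos P hv0 hT0 hN hge
  have hwanti : ∀ s t, T0 ≤ s → s ≤ t → t ≤ t1 → u t + v t ≤ u s + v s := by
    intro s t hs hst ht
    exact anti_of' (f := fun t => u t + v t) hst (fun r hr => H.hw (hT0.trans (hs.trans hr.1)))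
      (fun r hr => by
        have := hwd r (hT0.trans (hs.trans hr.1)) (hge r ⟨hs.trans hr.1, hr.2.trans ht⟩)
        linarith)
  refine ⟨t1, ht1.1, ht1.2, hut1, fun t ht => ⟨hge t ht, hNp t ht,
    hwanti T0 t le_rfl ht.1 ht.2⟩, ?_⟩
  -- the time where u = δ
  obtain ⟨td, htd, hutd⟩ := intermediate_value_Icc' ht1.1.le (H.contu (b := t1) hT0)
    (show δ ∈ Icc (u t1) (u T0) from ⟨by rw [hut1]; linarith, hu.le⟩)
  have h1 := hwanti td t1 htd.1 htd.2 le_rfl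
  have h2 := hNp td htd
  unfold N at h2
  rw [hutd] at h2
  have h3 := P.Rhi (x := δ) le_rfl
  have h4 := H.hy2 td (hT0.trans htd.1)
  have h5 := H.mono_ym (hT0.trans htd.1)
  have h6 : S.R (δ / ε) * S.y (v td) ≤ S.c2 * δ * S.yM :=
    mul_le_mul h3 h4 h5.le (by have := S.hc2; positivity)
  have h7 : v td ≤ (1 + S.c2 * S.yM) / S.g0 * δ := by
    rw [div_mul_eq_mul_div, le_div_iff₀ hg]
    nlinarith
  rw [hutd] at h1
  unfold M
  nlinarith

/-- second part of the descent: crossing -/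
lemma Sol.desc2 (H : S.Sol ε e0 μ u v) (P : S.Par ρ δ ε e0 μ) (hv0 : 0 < v 0) {t1 u0 : ℝ}
    (ht1 : 0 ≤ t1) (hu1 : u t1 = 2 * ρ * δ) (hw1 : u t1 + v t1 ≤ (S.M - 1) * δ)
    (hu0 : 0 < u0) (hu01 : u0 ≤ 1) (hu0n : u0 + S.g0 * (S.M * δ + 2 * u0) ≤ S.n0)
    (hn2 : 2 * δ ≤ S.n0) (hnu : u0 + δ < S.n0) :
    ∃ te, t1 < te ∧ te ≤ t1 + 1 / δ ∧ u te = - u0 ∧ (∀ t ∈ Ico t1 te, - u0 < u t) ∧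
      ∀ t ∈ Icc t1 te, u t ≤ 2 * ρ * δ ∧ 2 * δ ≤ S.N ε (u t) (v t) ∧
        (u t ≤ 0 → S.n0 ≤ S.N ε (u t) (v t)) ∧ v t ≤ S.M * δ + 2 * u0 := by
  have hρ := P.hρ
  have hδ := P.hδ
  have hρδ := mul_pos hρ hδ
  have hρ6 := P.hρ6
  have hg := S.hg0
  have hM := S.M_pos
  have hρδ6 : ρ * δ ≤ δ / 6 := by nlinarith
  have hvl := H.vlow P hv0
  -- bounds on N
  have hNb : ∀ t, 0 ≤ t → - u0 ≤ u t → u t ≤ 3 * ρ * δ → 2 * u t + v t ≤ S.M * δ →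
      2 * δ ≤ S.N ε (u t) (v t) ∧ (u t ≤ 0 → S.n0 ≤ S.N ε (u t) (v t)) := by
    intro t ht h1 h2 h3
    have hy := H.hy1 t ht
    have hR := S.hRpos (u t / ε)
    have hRy : S.R (u t / ε) * S.ym ≤ S.R (u t / ε) * S.y (v t) :=
      mul_le_mul_of_nonneg_left hy hR.le
    have hneg : u t ≤ 0 → S.n0 ≤ S.N ε (u t) (v t) := by
      intro h
      have h4 : S.R 0 ≤ S.R (u t / ε) := S.hanti (div_nonpos_of_nonpos_of_nonneg h P.hε.le)
      have h5 : S.R 0 * S.ym ≤ S.R (u t / ε) * S.ym := mul_le_mul_of_nonneg_right h4 S.hym.le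
      have h6 : S.g0 * v t ≤ S.g0 * (S.M * δ + 2 * u0) := by
        apply mul_le_mul_of_nonneg_left _ hg.le; linarith
      unfold n0 at hu0n ⊢
      unfold N
      linarith
    refine ⟨?_, hneg⟩
    rcases le_total (u t) 0 with h | h
    · linarith [hneg h]
    · have h4 := P.Rlo h2
      have h6 : S.g0 * v t ≤ S.g0 * (S.M * δ) := by
        apply mul_le_mul_of_nonneg_left _ hg.le; linarith
      unfold N
      nlinarith
  -- bootstrap on intervals where u ≥ -u0
  have hboot : ∀ b, (∀ t ∈ Icc t1 b, - u0 ≤ u t) → ∀ t ∈ Icc t1 b,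
      0 < min (3 * ρ * δ - u t) (S.M * δ - (2 * u t + v t)) := by
    intro b hb
    apply boot
    · apply ContinuousOn.inf
      · exact continuousOn_const.sub (H.contu ht1)
      · exact continuousOn_const.sub ((continuousOn_const.mul (H.contu ht1)).add (H.contv ht1))
    · rw [lt_min_iff]; constructor <;> nlinarith
    · intro t ht hnn _
      have hB : ∀ s ∈ Icc t1 t, 2 * δ ≤ S.N ε (u s) (v s) ∧
          (u s ≤ 0 → S.n0 ≤ S.N ε (u s) (v s)) := by
        intro s hs
        have h1 := hnn s hs
        rw [le_min_iff] at h1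
        exact hNb s (ht1.trans hs.1) (hb s ⟨hs.1, hs.2.trans ht.2⟩) (by linarith) (by linarith)
      have hu' : u t ≤ u t1 := anti_of' ht.1.le (fun s hs => H.hu s (ht1.trans hs.1))
        (fun s hs => by have := (hB s hs).1; linarith)
      have hw' : u t + v t + u t ≤ u t1 + v t1 + u t1 :=
        anti_of' (f := fun s => u s + v s + u s) ht.1.le
        (fun s hs => (H.hw (ht1.trans hs.1)).add (H.hu s (ht1.trans hs.1)))
        (fun s hs => by
          have h1 := hB s hs
          have he := Sol.e_le P (hvl s (ht1.trans hs.1))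
          have hbs := hb s ⟨hs.1, hs.2.trans ht.2⟩
          rcases le_total (u s) 0 with h | h
          · have := h1.2 h; linarith
          · linarith [h1.1])
      rw [lt_min_iff]; constructor <;> nlinarith
  have hex : ∃ t ∈ Icc t1 (t1 + 1 / δ), u t ≤ - u0 := by
    by_contra hcon
    push Not at hcon
    have hB := hboot (t1 + 1 / δ) (fun t ht => (hcon t ht).le)
    have hpos : 0 < 1 / δ := by positivity
    have := anti_of' (f := fun t => u t + 2 * δ * t)
      (f' := fun t => -(S.N ε (u t) (v t)) + 2 * δ) (a := t1) (b := t1 + 1 / δ) (by linarith)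
      (fun t ht => by
        have h2 := (hasDerivAt_id t).const_mul (2 * δ)
        rw [mul_one] at h2
        exact (H.hu t (ht1.trans ht.1)).add h2)
      (fun t ht => by
        have h1 := hB t ht
        rw [lt_min_iff] at h1
        have := (hNb t (ht1.trans ht.1) (hcon t ht).le (by linarith) (by linarith)).1
        linarith)
    have h2 := hcon (t1 + 1 / δ) ⟨by linarith, le_rfl⟩
    have h3 : 2 * δ * (1 / δ) = 2 := by field_simp
    have hδ1 := P.hδ1
    nlinarith
  obtain ⟨te, hte, hute, hpos⟩ := firsthit (H.contu ht1) (by nlinarith) hex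
  have hge : ∀ t ∈ Icc t1 te, - u0 ≤ u t := by
    intro t ht
    rcases lt_or_eq_of_le ht.2 with h | h
    · exact (hpos t ⟨ht.1, h⟩).le
    · rw [h, hute]
  have hB := hboot te hge
  have hNN : ∀ t ∈ Icc t1 te, 2 * δ ≤ S.N ε (u t) (v t) ∧
      (u t ≤ 0 → S.n0 ≤ S.N ε (u t) (v t)) := by
    intro t ht
    have h1 := hB t ht
    rw [lt_min_iff] at h1
    exact hNb t (ht1.trans ht.1) (hge t ht) (by linarith) (by linarith)
  refine ⟨te, hte.1, hte.2, hute, hpos, fun t ht => ⟨?_, (hNN t ht).1, (hNN t ht).2, ?_⟩⟩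
  · rw [← hu1]
    exact anti_of' ht.1 (fun s hs => H.hu s (ht1.trans hs.1))
        (fun s hs => by have := (hNN s ⟨hs.1, hs.2.trans ht.2⟩).1; linarith)
  · have h1 := hB t ht
    rw [lt_min_iff] at h1
    linarith [hge t ht]

end HS
end SDO

namespace SDO
open Set
namespace HS

variable (S : HS)
noncomputable def Lm (T0 : ℝ) : ℝ := S.v0 / 2 * Real.exp (-(2 * S.g0 * T0))
noncomputable def Vb : ℝ := S.yM + 1 / S.g0
noncomputable def ng (T0 : ℝ) : ℝ := S.gu T0 - S.g0 * S.gv T0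
noncomputable def C' : ℝ := S.c2 * S.yM + 2
noncomputable def lam : ℝ := S.gm / S.C' ^ 2
noncomputable def q (T0 : ℝ) : ℝ := 4 * (S.gu T0 + 3) / S.ng T0
noncomputable def Kc : ℝ := S.gM / 2 + 4 * S.gM / S.n0 ^ 2

structure Cond (c T0 u0 m er δ : ℝ) : Prop where
  hT0 : 0 ≤ T0
  hgu : 0 < S.gu T0
  hng : 0 < S.ng T0
  hu0 : 0 < u0
  hu01 : u0 ≤ 1
  hu0v : 7 * u0 ≤ S.v0
  hm : 0 < m
  hmu : m < u0
  hmL : m ≤ S.g0 * S.Lm T0 / 4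
  hδ0 : 0 < δ
  hδm : δ ≤ m
  hδL : S.c2 * δ * S.yM ≤ S.g0 * S.Lm T0 / 4
  hδL2 : δ * (1 + S.v0) ≤ S.g0 * S.Lm T0
  hω : 2 * ((S.c2 * S.yM + 1 + S.Vb) * δ) ^ 2 ≤ u0 ^ 2
  her0 : 0 < er
  her : 11 * u0 ^ 2 * Real.exp ((S.g0 + 1) * T0) ≤ er ^ 2
  heru : er ≤ S.gu T0 / 2
  hern : (1 + S.g0) * er ≤ S.ng T0 / 2
  hern2 : (1 + S.gM) * (2 * er) ≤ S.ng T0 / 4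
  her1 : er ≤ 1
  hδu : δ < S.gu T0 / 2
  hδn : u0 + S.g0 * (S.M * δ + 2 * u0) ≤ S.n0
  hδn2 : 2 * δ ≤ S.n0
  hδn3 : u0 + δ < S.n0
  hδM : S.M * δ < u0
  hδg : δ ≤ S.g0 * u0
  hu0c : u0 ≤ c / 8
  herc : er ≤ c / 8
  hguc : ∀ s, T0 ≤ s → |S.gu s| ≤ c / 8
  hgvc : ∀ s, T0 ≤ s → |S.gv s| ≤ c / 8
  hδc : S.c2 * δ ≤ 1
  hδl : S.L * δ * S.yM ≤ m ^ 2
  hfin : Real.exp S.Kc * (δ / (S.gu T0 / 2)) ^ S.lam *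
    (2 * (1 + S.q T0) ^ 2 * Real.exp ((S.g0 + 4) * T0)) ≤ 1 / 4

variable {S} {ρ δ ε e0 μ c T0 u0 m er : ℝ} {u v : ℝ → ℝ}

lemma Lm_pos (S : HS) (T0 : ℝ) : 0 < S.Lm T0 := by
  have := S.hv0
  unfold Lm; positivity

lemma Sol.absv (H : S.Sol ε e0 μ u v) {t : ℝ} (ht : 0 ≤ t) : |v t| ≤ S.Vb := by
  have h1 := H.mono_ym ht
  have h2 := H.hy2 t ht
  have h3 : 0 < 1 / S.g0 := by have := S.hg0; positivity
  unfold y at h1 h2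
  unfold Vb
  rcases S.hσ with h | h <;> rw [h] at h1 h2 <;> rw [abs_le] <;> constructor <;> linarith [S.hyM0]

lemma Sol.v0pos (C : S.Cond c T0 u0 m er δ) (hv : |v 0 - S.v0| ≤ 3 * u0) : S.v0 / 2 < v 0 := by
  have := (abs_le.1 hv).1
  have := C.hu0v; have := C.hu0
  linarith

lemma Sol.low_v (H : S.Sol ε e0 μ u v) (P : S.Par ρ δ ε e0 μ) (C : S.Cond c T0 u0 m er δ)
    (hv : |v 0 - S.v0| ≤ 3 * u0) : ∀ t ∈ Icc 0 T0, S.Lm T0 < v t := by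
  have hg := S.hg0
  have hv0 := S.hv0
  have hρ := P.hρ
  have hδ := P.hδ
  intro t ht
  have hL : ∀ s ∈ Icc 0 T0, S.Lm T0 ≤ S.Lm s := by
    intro s hs
    unfold Lm
    have : Real.exp (-(2 * S.g0 * T0)) ≤ Real.exp (-(2 * S.g0 * s)) := by
      apply Real.exp_le_exp.2
      nlinarith [hs.2]
    nlinarith
  have hL2 : ∀ s ∈ Icc 0 T0, S.Lm s ≤ S.v0 := by
    intro s hs
    unfold Lm
    have : Real.exp (-(2 * S.g0 * s)) ≤ 1 := by
      apply Real.exp_le_one_iff.2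
      have := mul_nonneg hg.le hs.1
      linarith
    nlinarith
  have hd : ∀ s, HasDerivAt S.Lm (-(2 * S.g0) * S.Lm s) s := by
    intro s
    have h2 : HasDerivAt (fun t : ℝ => Real.exp (-(2 * S.g0 * t)))
          (Real.exp (-(2 * S.g0 * s)) * (-(2 * S.g0 * 1))) s :=
        ((((hasDerivAt_id s)).const_mul (2 * S.g0)).neg).exp
    have := h2.const_mul (S.v0 / 2)
    refine this.congr_deriv ?_
    unfold Lm; ring
  have := barrier (f := fun s => v s - S.Lm s) (a := 0) (b := T0)
    (f' := fun s => e0 - μ * v s - u s + S.N ε (u s) (v s) - (-(2 * S.g0) * S.Lm s))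
    (fun s hs => (H.hv s hs.1).sub (hd s))
    (by
      have := Sol.v0pos C hv
      have h : S.Lm 0 = S.v0 / 2 := by simp [Lm]
      rw [h]; linarith)
    (fun s hs hz _ => by
      have hvs : v s = S.Lm s := by linarith
      have h1 := mul_pos (S.hRpos (u s / ε)) (H.mono_ym hs.1.le)
      have h2 := abs_le.1 P.he0
      have h3 := hL s ⟨hs.1.le, hs.2⟩
      have h3' := hL2 s ⟨hs.1.le, hs.2⟩
      have h4 : 0 < ρ * δ := by positivity
      have h5 := S.Lm_pos s
      have h6 : μ * S.Lm s ≤ ρ * δ * S.v0 := mul_le_mul P.hμ h3' h5.le h4.le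
      have h7 := C.hδL2
      have h8 : S.g0 * S.Lm T0 ≤ S.g0 * S.Lm s := mul_le_mul_of_nonneg_left h3 hg.le
      have h9 : ρ * δ ≤ δ / 6 := by nlinarith [P.hρ6]
      have h10 : ρ * δ * S.v0 ≤ δ / 6 * S.v0 := mul_le_mul_of_nonneg_right h9 hv0.le
      have h11 : 0 < δ * S.v0 := by positivity
      unfold N
      rw [hvs] at h1 ⊢
      nlinarith) t ht
  linarith [hL t ht]

lemma Sol.low_u (H : S.Sol ε e0 μ u v) (P : S.Par ρ δ ε e0 μ) (C : S.Cond c T0 u0 m er δ)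
    (hu : u 0 = u0) (hv : |v 0 - S.v0| ≤ 3 * u0) : ∀ t ∈ Icc 0 T0, m < u t := by
  have hl := H.low_v P C hv
  intro t ht
  have := barrier (f := fun s => u s - m) (a := 0) (b := T0)
    (f' := fun s => -(S.N ε (u s) (v s)))
    (fun s hs => (H.hu s hs.1).sub_const m)
    (by rw [hu]; linarith [C.hmu])
    (fun s hs hz _ => by
      have hus : u s = m := by linarith
      have h1 := P.Rhi (x := u s) (by rw [hus]; exact C.hδm)
      have h2 := H.hy2 s hs.1.le
      have h5 := H.mono_ym hs.1.le
      have h6 : S.R (u s / ε) * S.y (v s) ≤ S.c2 * δ * S.yM :=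
        mul_le_mul h1 h2 h5.le (by have := S.hc2; have := P.hδ; positivity)
      have h7 := C.hδL
      have h8 := C.hmL
      have h9 : S.g0 * S.Lm T0 < S.g0 * v s :=
        mul_lt_mul_of_pos_left (hl s ⟨hs.1.le, hs.2⟩) S.hg0
      have := mul_pos S.hg0 (S.Lm_pos T0)
      unfold N
      linarith) t ht
  linarith

lemma close_alg {g us vs gu gv r e A B ω : ℝ} (hg : 0 < g) (h10 : r ^ 2 ≤ ω ^ 2)
    (h11 : (e + r) ^ 2 ≤ ω ^ 2) (hA : A = us - gu) (hB : B = vs - gv) :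
    2 * A * (-(us + r - g * vs) - (g * gv - gu))
        + 2 * B * (e - us + (us + r - g * vs) - -(g * gv)) ≤
      (g + 1) * (A ^ 2 + B ^ 2) + 2 * ω ^ 2 := by
  have e1 : us = A + gu := by rw [hA]; ring
  have e2 : vs = B + gv := by rw [hB]; ring
  have h3 := mul_nonneg hg.le (sq_nonneg (A - B))
  have h4 := mul_nonneg hg.le (sq_nonneg B)
  have h5 := sq_nonneg (A + r)
  have h6 := sq_nonneg (B - (e + r))
  rw [e1, e2]
  nlinarith [sq_nonneg A, sq_nonneg B]

set_option maxHeartbeats 800000 in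
lemma Sol.close (H : S.Sol ε e0 μ u v) (P : S.Par ρ δ ε e0 μ) (C : S.Cond c T0 u0 m er δ)
    (hu : u 0 = u0) (hv : |v 0 - S.v0| ≤ 3 * u0) : ∀ t ∈ Icc 0 T0,
    |u t - S.gu t| ≤ er ∧ |v t - S.gv t| ≤ er := by
  have hl := H.low_u P C hu hv
  intro t ht
  have hg := S.hg0
  have hc2 := S.hc2
  have hyM := S.hyM0
  have hδ := P.hδ
  have hVb : 0 ≤ S.Vb := (abs_nonneg _).trans (H.absv le_rfl)
  set ω := (S.c2 * S.yM + 1 + S.Vb) * δ with hω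
  have hω0 : 0 ≤ ω := by positivity
  have key := gron (f := fun s => (u s - S.gu s) ^ 2 + (v s - S.gv s) ^ 2) (a := 0) (b := t)
    (K := S.g0 + 1) (ω := 2 * ω ^ 2)
    (f' := fun s => 2 * (u s - S.gu s) * (-(S.N ε (u s) (v s)) - (S.g0 * S.gv s - S.gu s))
      + 2 * (v s - S.gv s) * (e0 - μ * v s - u s + S.N ε (u s) (v s) - (-(S.g0 * S.gv s))))
    ht.1 (by linarith) (by positivity)
    (fun s hs => by
      have h1 := ((H.hu s hs.1).sub (S.hgu s)).pow 2
      have h2 := ((H.hv s hs.1).sub (S.hgv s)).pow 2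
      refine (h1.add h2).congr_deriv ?_
      simp)
    (fun s hs => by
      have hus := (hl s ⟨hs.1, hs.2.trans ht.2⟩).le
      have h1 := P.Rhi (x := u s) (C.hδm.trans hus)
      have h2 := H.hy2 s hs.1
      have h5 := H.mono_ym hs.1
      have h6 : S.R (u s / ε) * S.y (v s) ≤ S.c2 * δ * S.yM :=
        mul_le_mul h1 h2 h5.le (by positivity)
      have h7 := mul_pos (S.hRpos (u s / ε)) h5
      have h8 : |e0 - μ * v s| ≤ δ + δ * S.Vb := by
        have ha := P.he0
        have hb := H.absv hs.1
        have hρ : ρ * δ ≤ δ := by nlinarith [P.hρ6]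
        calc |e0 - μ * v s| ≤ |e0| + |μ * v s| := abs_sub _ _
          _ ≤ δ + δ * S.Vb := by
            rw [abs_mul, abs_of_nonneg P.hμ0]
            exact add_le_add (ha.trans hρ)
              (mul_le_mul (P.hμ.trans hρ) hb (abs_nonneg _) hδ.le)
      rw [abs_le] at h8
      have h9 : N S ε (u s) (v s) = u s + S.R (u s / ε) * S.y (v s) - S.g0 * v s := rfl
      rw [h9]
      set r := S.R (u s / ε) * S.y (v s)
      set e := e0 - μ * v s
      set A := u s - S.gu s with hA
      set B := v s - S.gv s with hB
      have h10 : r ^ 2 ≤ ω ^ 2 := by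
        apply pow_le_pow_left₀ h7.le
        rw [hω]; nlinarith [mul_nonneg hδ.le hVb]
      have h11 : (e + r) ^ 2 ≤ ω ^ 2 := by
        apply sq_le_sq'
        · rw [hω]; nlinarith [mul_nonneg hδ.le hVb, mul_pos (mul_pos hc2 hδ) hyM]
        · rw [hω]; nlinarith [mul_nonneg hδ.le hVb]
      exact close_alg hg h10 h11 hA hB)
  have h0 : (u 0 - S.gu 0) ^ 2 + (v 0 - S.gv 0) ^ 2 + 2 * ω ^ 2 ≤ 11 * u0 ^ 2 := by
    rw [hu, S.hgu0, S.hgv0]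
    have := sq_le_sq' (abs_le.1 hv).1 (abs_le.1 hv).2
    have := C.hω
    nlinarith
  have h1 : (u t - S.gu t) ^ 2 + (v t - S.gv t) ^ 2 ≤ er ^ 2 := by
    refine key.trans (le_trans ?_ C.her)
    have : Real.exp ((S.g0 + 1) * (t - 0)) ≤ Real.exp ((S.g0 + 1) * T0) := by
      apply Real.exp_le_exp.2
      nlinarith [ht.2]
    gcongr
  constructor <;> apply abs_le_of_sq_le_sq _ C.her0.le <;>
    nlinarith [sq_nonneg (u t - S.gu t), sq_nonneg (v t - S.gv t)]

structure Desc (S : HS) (ρ δ ε e0 μ u0 T0 te : ℝ) (u v : ℝ → ℝ) : Prop where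
  hte : T0 < te
  ute : u te = - u0
  first : ∀ t ∈ Ico 0 te, - u0 < u t
  Np : ∀ t ∈ Icc T0 te, 0 < S.N ε (u t) (v t)
  N2 : ∀ t ∈ Icc T0 te, u t < 2 * ρ * δ → 2 * δ ≤ S.N ε (u t) (v t)
  N3 : ∀ t ∈ Icc T0 te, u t ≤ 0 → S.n0 ≤ S.N ε (u t) (v t)
  vte : |v te| < 3 * u0

noncomputable def Tmax (S : HS) (T0 ρ δ : ℝ) : ℝ :=
  T0 + 2 * (S.gu T0 + S.gv T0 + 2 + 1) / (ρ * δ) + 1 / δ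

lemma Sol.atT0 (H : S.Sol ε e0 μ u v) (P : S.Par ρ δ ε e0 μ) (C : S.Cond c T0 u0 m er δ)
    (hu : u 0 = u0) (hv : |v 0 - S.v0| ≤ 3 * u0) :
    S.ng T0 / 2 ≤ S.N ε (u T0) (v T0) ∧ S.gu T0 / 2 ≤ u T0 := by
  have h := H.close P C hu hv T0 ⟨C.hT0, le_rfl⟩
  have h1 := abs_le.1 h.1
  have h2 := abs_le.1 h.2
  have h3 := C.heru
  have h4 := C.hern
  have h7 := mul_pos (S.hRpos (u T0 / ε)) (H.mono_ym C.hT0)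
  have h8 : S.g0 * (v T0 - S.gv T0) ≤ S.g0 * er := mul_le_mul_of_nonneg_left h2.2 S.hg0.le
  refine ⟨?_, by linarith⟩
  unfold N
  unfold ng at *
  linarith

lemma Sol.desc (H : S.Sol ε e0 μ u v) (P : S.Par ρ δ ε e0 μ) (C : S.Cond c T0 u0 m er δ)
    (hu : u 0 = u0) (hv : |v 0 - S.v0| ≤ 3 * u0) :
    ∃ te ≤ S.Tmax T0 ρ δ, S.Desc ρ δ ε e0 μ u0 T0 te u v ∧
      (∀ t ∈ Icc 0 te, ∃ s, 0 ≤ s ∧ |u t - S.gu s| ≤ c ∧ |v t - S.gv s| ≤ c) ∧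
      (∀ s, 0 ≤ s → ∃ t ∈ Icc 0 te, |u t - S.gu s| ≤ c ∧ |v t - S.gv s| ≤ c) := by
  have hρ := P.hρ
  have hδ := P.hδ
  have hρδ := mul_pos hρ hδ
  have hρδ6 : ρ * δ ≤ δ / 6 := by nlinarith [P.hρ6]
  have hg := S.hg0
  have hT0 := C.hT0
  have hu0 := C.hu0
  have hvp : 0 < v 0 := by have := Sol.v0pos C hv; have := S.hv0; linarith
  have hcl := H.close P C hu hv
  have hlow := H.low_u P C hu hv
  have hvl := H.vlow P hvp
  obtain ⟨hN0, hU0⟩ := H.atT0 P C hu hv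
  have hb : 2 * ρ * δ / S.g0 ≤ u0 / 3 := by
    rw [div_le_iff₀ hg]; have := C.hδg; nlinarith
  obtain ⟨t1, ht01, ht1le, hut1, hD1, hw1⟩ := H.desc1 P hvp hT0 (by linarith [C.hng])
    (by linarith [C.hδu])
  have ht10 : 0 ≤ t1 := hT0.trans ht01.le
  obtain ⟨te, hte1, htele, hute, hfirst, hD2⟩ := H.desc2 P hvp ht10 hut1 hw1 hu0 C.hu01 C.hδn
    C.hδn2 C.hδn3
  have hclT := hcl T0 ⟨hT0, le_rfl⟩
  have hc1 := abs_le.1 hclT.1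
  have hc2 := abs_le.1 hclT.2
  have her1 := C.her1
  have hγu := C.hguc T0 le_rfl
  have hγv := C.hgvc T0 le_rfl
  have hγu' := abs_le.1 hγu
  have hγv' := abs_le.1 hγv
  have hte0 : te ∈ Icc t1 te := ⟨hte1.le, le_rfl⟩
  have hMδ := C.hδM
  have h2ρδ : 2 * ρ * δ ≤ u0 := by
    have := S.M_pos
    have : δ ≤ S.M * δ := by nlinarith
    nlinarith
  refine ⟨te, ?_, ⟨ht01.trans hte1, hute, ?_, ?_, ?_, ?_, ?_⟩, ?_, ?_⟩
  · unfold Tmax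
    have : 2 * (u T0 + v T0 + 1) / (ρ * δ) ≤ 2 * (S.gu T0 + S.gv T0 + 2 + 1) / (ρ * δ) := by
      apply div_le_div_of_nonneg_right _ hρδ.le
      linarith
    linarith
  · intro t ht
    rcases le_or_gt t T0 with h | h
    · have := hlow t ⟨ht.1, h⟩; linarith [C.hm]
    rcases lt_or_ge t t1 with h' | h'
    · have := (hD1 t ⟨h.le, h'.le⟩).1; linarith
    · exact hfirst t ⟨h', ht.2⟩
  · intro t ht
    rcases le_total t t1 with h' | h'
    · exact (hD1 t ⟨ht.1, h'⟩).2.1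
    · linarith [(hD2 t ⟨h', ht.2⟩).2.1]
  · intro t ht hut
    rcases le_total t t1 with h' | h'
    · linarith [(hD1 t ⟨ht.1, h'⟩).1]
    · linarith [(hD2 t ⟨h', ht.2⟩).2.1]
  · intro t ht hut
    rcases le_total t t1 with h' | h'
    · linarith [(hD1 t ⟨ht.1, h'⟩).1]
    · exact (hD2 t ⟨h', ht.2⟩).2.2.1 hut
  · rw [abs_lt]
    have h1 := (hD2 te hte0).2.2.2
    have h2 := hvl te (by linarith)
    constructor <;> linarith
  · intro t ht
    have herc := C.herc
    have hu0c := C.hu0c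
    rcases le_or_gt t T0 with h | h
    · have := hcl t ⟨ht.1, h⟩
      exact ⟨t, ht.1, by linarith, by linarith⟩
    refine ⟨T0, hT0, ?_⟩
    have h3 := hvl t ht.1
    rcases le_total t t1 with h' | h'
    · have := hD1 t ⟨h.le, h'⟩
      constructor <;> rw [abs_le] <;> constructor <;> linarith
    · have := hD2 t ⟨h', ht.2⟩
      have h5 : - u0 ≤ u t := by
        rcases lt_or_eq_of_le ht.2 with h6 | h6
        · exact (hfirst t ⟨h', h6⟩).le
        · rw [h6, hute]
      constructor <;> rw [abs_le] <;> constructor <;> linarith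
  · intro s hs
    have herc := C.herc
    have hu0c := C.hu0c
    rcases le_or_gt s T0 with h | h
    · have := hcl s ⟨hs, h⟩
      exact ⟨s, ⟨hs, by linarith⟩, by linarith, by linarith⟩
    refine ⟨T0, ⟨hT0, by linarith⟩, ?_⟩
    have h1 := abs_le.1 (C.hguc s h.le)
    have h2 := abs_le.1 (C.hgvc s h.le)
    constructor <;> rw [abs_le] <;> constructor <;> linarith

end HS
end SDO

namespace SDO
open Set
namespace HS

variable {S : HS} {ρ δ ε e0 μ c T0 u0 m er : ℝ} {u v u1 v1 u2 v2 : ℝ → ℝ}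

lemma gM_pos (S : HS) : 0 < S.gM := S.hgm.trans_le ((S.hg1 0).trans (S.hg2 0))
lemma n0_pos (S : HS) : 0 < S.n0 := by
  unfold n0; have := S.hRpos 0; have := S.hym; positivity
lemma C'_pos (S : HS) : 0 < S.C' := by
  unfold C'; have := S.hc2; have := S.hyM0; positivity
lemma lam_pos (S : HS) : 0 < S.lam := by
  unfold lam; have := S.hgm; have := S.C'_pos; positivity

lemma e12_alg {A B r g μ : ℝ} (hg : 0 < g) (hμ : 0 ≤ μ) (hr : |r| ≤ |A| + |B|) :
    2 * A * (-A - r + g * B) + 2 * B * (-(μ * B) + r - g * B) ≤ (g + 4) * (A ^ 2 + B ^ 2) := by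
  have h1 : -(A * r) ≤ |A| * (|A| + |B|) := by
    calc -(A * r) ≤ |A * r| := neg_le_abs _
      _ ≤ _ := by rw [abs_mul]; gcongr
  have h2 : B * r ≤ |B| * (|A| + |B|) := by
    calc (B * r) ≤ |B * r| := le_abs_self _
      _ ≤ _ := by rw [abs_mul]; gcongr
  have h3 := sq_abs A
  have h4 := sq_abs B
  have h5 := mul_nonneg hg.le (sq_nonneg (A - B))
  have h6 := mul_nonneg hg.le (sq_nonneg B)
  have h7 := mul_nonneg hμ (sq_nonneg B)
  nlinarith [sq_nonneg (|A| - |B|), sq_nonneg A, sq_nonneg B]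

set_option maxHeartbeats 800000 in
lemma contr0 (H1 : S.Sol ε e0 μ u1 v1) (H2 : S.Sol ε e0 μ u2 v2) (P : S.Par ρ δ ε e0 μ)
    (C : S.Cond c T0 u0 m er δ)
    (hu1 : u1 0 = u0) (hv1 : |v1 0 - S.v0| ≤ 3 * u0)
    (hu2 : u2 0 = u0) (hv2 : |v2 0 - S.v0| ≤ 3 * u0) :
    (u1 T0 - u2 T0) ^ 2 + (v1 T0 - v2 T0) ^ 2 ≤
      (v1 0 - v2 0) ^ 2 * Real.exp ((S.g0 + 4) * T0) := by
  have hl1 := H1.low_u P C hu1 hv1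
  have hl2 := H2.low_u P C hu2 hv2
  have hg := S.hg0
  have hm := C.hm
  have hε := P.hε
  have key := gron (f := fun s => (u1 s - u2 s) ^ 2 + (v1 s - v2 s) ^ 2) (a := 0) (b := T0)
    (K := S.g0 + 4) (ω := 0)
    (f' := fun s => 2 * (u1 s - u2 s) * (-(S.N ε (u1 s) (v1 s)) - (-(S.N ε (u2 s) (v2 s))))
      + 2 * (v1 s - v2 s) * (e0 - μ * v1 s - u1 s + S.N ε (u1 s) (v1 s)
        - (e0 - μ * v2 s - u2 s + S.N ε (u2 s) (v2 s))))
    C.hT0 (by linarith) le_rfl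
    (fun s hs => by
      have h1 := ((H1.hu s hs.1).sub (H2.hu s hs.1)).pow 2
      have h2 := ((H1.hv s hs.1).sub (H2.hv s hs.1)).pow 2
      refine (h1.add h2).congr_deriv ?_
      simp)
    (fun s hs => by
      have hus1 := (hl1 s hs).le
      have hus2 := (hl2 s hs).le
      have hr1 := P.Rhi (x := u1 s) (C.hδm.trans hus1)
      have hR0 := S.hRpos (u1 s / ε)
      have hy2 := H2.hy2 s hs.1
      have hy0 := H2.mono_ym hs.1
      have hεm : ε ≤ m := P.εδ.trans C.hδm
      have hp1 : 0 < u1 s := hm.trans_le hus1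
      have hp2 : 0 < u2 s := hm.trans_le hus2
      have hRd := S.hRL (u1 s / ε) (u2 s / ε) ((one_le_div hε).2 (hεm.trans hus1))
        ((one_le_div hε).2 (hεm.trans hus2))
      have hinv : |(u1 s / ε)⁻¹ - (u2 s / ε)⁻¹| ≤ δ / m ^ 2 * |u1 s - u2 s| := by
        have : (u1 s / ε)⁻¹ - (u2 s / ε)⁻¹ = - (ε / (u1 s * u2 s) * (u1 s - u2 s)) := by
          field_simp; ring
        rw [this, abs_neg, abs_mul, abs_of_pos (by positivity)]
        apply mul_le_mul_of_nonneg_right _ (abs_nonneg _)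
        rw [sq]
        have := P.εδ
        have := P.hδ
        gcongr
      have hr : |S.R (u1 s / ε) * S.y (v1 s) - S.R (u2 s / ε) * S.y (v2 s)| ≤
          |u1 s - u2 s| + |v1 s - v2 s| := by
        have e1 : S.R (u1 s / ε) * S.y (v1 s) - S.R (u2 s / ε) * S.y (v2 s) =
            (S.R (u1 s / ε) - S.R (u2 s / ε)) * S.y (v2 s)
            + S.R (u1 s / ε) * (S.σ * (v1 s - v2 s)) := by
          unfold y; ring
        rw [e1]
        refine (abs_add_le _ _).trans (add_le_add ?_ ?_)
        · rw [abs_mul, abs_of_pos hy0]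
          have hL := S.hL
          calc |S.R (u1 s / ε) - S.R (u2 s / ε)| * S.y (v2 s)
              ≤ (S.L * (δ / m ^ 2 * |u1 s - u2 s|)) * S.yM := by
                apply mul_le_mul (hRd.trans (mul_le_mul_of_nonneg_left hinv hL)) hy2 hy0.le
                have := P.hδ
                positivity
            _ = (S.L * δ * S.yM / m ^ 2) * |u1 s - u2 s| := by ring
            _ ≤ 1 * |u1 s - u2 s| := by
                apply mul_le_mul_of_nonneg_right _ (abs_nonneg _)
                rw [div_le_one (by positivity)]
                exact C.hδl
            _ = _ := one_mul _
        · have hσ : |S.σ| = 1 := by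
            rcases S.hσ with h | h <;> simp [h]
          rw [abs_mul, abs_mul, hσ, one_mul, abs_of_pos hR0]
          have := hr1.trans C.hδc
          nlinarith [abs_nonneg (v1 s - v2 s)]
      have e2 : N S ε (u1 s) (v1 s) = u1 s + S.R (u1 s / ε) * S.y (v1 s) - S.g0 * v1 s := rfl
      have e3 : N S ε (u2 s) (v2 s) = u2 s + S.R (u2 s / ε) * S.y (v2 s) - S.g0 * v2 s := rfl
      have := e12_alg hg P.hμ0 hr
      rw [e2, e3, add_zero]
      refine le_trans (le_of_eq ?_) this
      ring)
  rw [hu1, hu2] at key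
  simpa using key

lemma contr1 (H1 : S.Sol ε e0 μ u1 v1) (P : S.Par ρ δ ε e0 μ)
    (C : S.Cond c T0 u0 m er δ) {te uL : ℝ} (D : S.Desc ρ δ ε e0 μ u0 T0 te u1 v1)
    (hu1 : u1 0 = u0) (hv1 : |v1 0 - S.v0| ≤ 3 * u0) (huL : δ < uL) (hle : uL ≤ u1 T0)
    (hcl : u1 T0 - uL ≤ 2 * er) :
    ∃ s1 ∈ Icc T0 te, u1 s1 = uL ∧
      |(u1 s1 + v1 s1) - (u1 T0 + v1 T0)| ≤ S.q T0 * (u1 T0 - uL) := by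
  have hT0 := C.hT0
  have hvp : 0 < v1 0 := by have := Sol.v0pos C hv1; have := S.hv0; linarith
  have hδ := P.hδ
  have hρδ := mul_pos P.hρ P.hδ
  have hρδ6 : ρ * δ ≤ δ / 6 := by nlinarith [P.hρ6]
  have hvl := H1.vlow P hvp
  obtain ⟨s1, hs1, hus1⟩ := intermediate_value_Icc' D.hte.le (H1.contu (b := te) hT0)
    (show uL ∈ Icc (u1 te) (u1 T0) from ⟨by rw [D.ute]; linarith [C.hu0], hle⟩)
  refine ⟨s1, hs1, hus1, ?_⟩
  have hanti : ∀ t ∈ Icc T0 s1, u1 t ≤ u1 T0 ∧ uL ≤ u1 t := by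
    intro t ht
    constructor
    · exact anti_of' ht.1 (fun r hr => H1.hu r (hT0.trans hr.1))
        (fun r hr => by
          have := D.Np r ⟨hr.1, hr.2.trans (ht.2.trans hs1.2)⟩; linarith)
    · rw [← hus1]
      exact anti_of' ht.2 (fun r hr => H1.hu r (hT0.trans (ht.1.trans hr.1)))
        (fun r hr => by
          have := D.Np r ⟨ht.1.trans hr.1, hr.2.trans hs1.2⟩; linarith)
  have hgM := S.gM_pos
  have hN0 := (H1.atT0 P C hu1 hv1).1
  have hNlow : ∀ t ∈ Icc T0 s1, S.ng T0 / 4 ≤ S.N ε (u1 t) (v1 t) := by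
    intro t ht
    have := mono_of' (f := fun t => S.N ε (u1 t) (v1 t) - (1 + S.gM) * u1 t) ht.1
      (fun r hr => (H1.hN (hT0.trans hr.1)).sub ((H1.hu r (hT0.trans hr.1)).const_mul (1 + S.gM)))
      (fun r hr => by
        have hr' : r ∈ Icc T0 s1 := ⟨hr.1, hr.2.trans ht.2⟩
        have h1 := D.Np r ⟨hr.1, hr'.2.trans hs1.2⟩
        have h2 := S.hg1 (u1 r / ε)
        have h3 := S.hg2 (u1 r / ε)
        have h4 := Sol.e_le P (hvl r (hT0.trans hr.1))
        have h5 := (hanti r hr').2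
        have h6 : S.R' (u1 r / ε) / ε * S.y (v1 r) ≤ 0 :=
          mul_nonpos_of_nonpos_of_nonneg (div_nonpos_of_nonpos_of_nonneg (S.hR' _) P.hε.le)
            (H1.mono_ym (hT0.trans hr.1)).le
        set g := S.g0 - S.σ * S.R (u1 r / ε)
        have h7 : 0 ≤ (u1 r - (e0 - μ * v1 r)) * g :=
          mul_nonneg (by linarith) (S.hgm.le.trans h2)
        set N := S.N ε (u1 r) (v1 r)
        have h8 : N * (1 + S.R' (u1 r / ε) / ε * S.y (v1 r) + g) ≤ N * (1 + S.gM) :=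
          mul_le_mul_of_nonneg_left (by linarith) h1.le
        linarith)
    have h1 := C.hern2
    have h2 : (1 + S.gM) * (u1 T0 - u1 t) ≤ (1 + S.gM) * (2 * er) :=
      mul_le_mul_of_nonneg_left (by linarith [(hanti t ht).2]) (by linarith)
    linarith
  have huT : u1 T0 ≤ S.gu T0 + 1 := by
    have := (abs_le.1 (H1.close P C hu1 hv1 T0 ⟨hT0, le_rfl⟩).1).2
    linarith [C.her1]
  have hng := C.hng
  have hgu := C.hgu
  have hq0 : 0 ≤ S.q T0 := by unfold q; positivity
  have hqn : S.q T0 * (S.ng T0 / 4) = S.gu T0 + 3 := by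
    unfold q; field_simp
  have hA := anti_of' (f := fun t => u1 t + v1 t) hs1.1
    (fun r hr => H1.hw (hT0.trans hr.1))
    (fun r hr => by
      have h4 := Sol.e_le P (hvl r (hT0.trans hr.1))
      have h5 := (hanti r hr).2
      linarith)
  have hB := mono_of' (f := fun t => u1 t + v1 t - S.q T0 * u1 t) hs1.1
    (fun r hr => (H1.hw (hT0.trans hr.1)).sub ((H1.hu r (hT0.trans hr.1)).const_mul (S.q T0)))
    (fun r hr => by
      have h5 := (hanti r hr).1
      have h6 := hNlow r hr
      have h7 : S.q T0 * (S.ng T0 / 4) ≤ S.q T0 * S.N ε (u1 r) (v1 r) :=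
        mul_le_mul_of_nonneg_left h6 hq0
      have h8 := abs_le.1 P.he0
      have h9 := H1.absv (hT0.trans hr.1)
      have h10 : μ * v1 r ≤ 1 := by
        have := (abs_le.1 h9).2
        have hVb : 0 ≤ S.Vb := (abs_nonneg _).trans h9
        have hω := C.hω
        have hc2 := S.hc2
        have hyM := S.hyM0
        have h3 : S.Vb * δ ≤ (S.c2 * S.yM + 1 + S.Vb) * δ := by
          apply mul_le_mul_of_nonneg_right _ hδ.le
          nlinarith [mul_pos hc2 hyM]
        have h4 : (S.c2 * S.yM + 1 + S.Vb) * δ ≤ 1 := by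
          have := C.hu01; have := C.hu0
          have : 0 ≤ (S.c2 * S.yM + 1 + S.Vb) * δ := by positivity
          nlinarith
        have h5 : μ * v1 r ≤ μ * S.Vb := mul_le_mul_of_nonneg_left (by assumption) P.hμ0
        have h6 : μ * S.Vb ≤ δ * S.Vb :=
          mul_le_mul_of_nonneg_right (P.hμ.trans (by linarith)) hVb
        linarith
      have := P.hδ1
      linarith)
  rw [abs_le]
  rw [hus1] at hA hB ⊢
  constructor <;> nlinarith

end HS
end SDO

namespace SDO
open Set
namespace HS

variable {S : HS} {ρ δ ε e0 μ c T0 u0 m er : ℝ} {u v u1 v1 u2 v2 : ℝ → ℝ}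

lemma graph (H : S.Sol ε e0 μ u v) {te s uL : ℝ} (hT0 : 0 ≤ T0)
    (D : S.Desc ρ δ ε e0 μ u0 T0 te u v) (hs : s ∈ Icc T0 te) (hus : u s = uL) :
    ∃ τ : ℝ → ℝ, (∀ x ∈ Icc (-u0) uL, τ x ∈ Icc T0 te ∧ u (τ x) = x) ∧
      τ (-u0) = te ∧ τ uL = s ∧ ContinuousOn (fun x => v (τ x)) (Icc (-u0) uL) ∧
      ∀ x ∈ Ioo (-u0) uL, HasDerivAt (fun x => v (τ x))
        ((x - (e0 - μ * v (τ x))) / S.N ε x (v (τ x)) - 1) x := by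
  have hs0 : 0 ≤ s := hT0.trans hs.1
  obtain ⟨τ, h1, h2, h3, h4⟩ := inverse (u := u) (N := fun t => S.N ε (u t) (v t)) hs.2
    (fun t ht => H.hu t (hs0.trans ht.1)) (fun t ht => D.Np t ⟨hs.1.trans ht.1, ht.2⟩)
  rw [D.ute, hus] at h1 h3 h4
  refine ⟨τ, fun x hx => ⟨⟨hs.1.trans (h1 x hx).1.1, (h1 x hx).1.2⟩, (h1 x hx).2⟩, ?_, ?_, ?_, ?_⟩
  · rw [← D.ute]; exact h2 te ⟨hs.2, le_rfl⟩
  · rw [← hus]; exact h2 s ⟨le_rfl, hs.2⟩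
  · exact (H.contv hs0).comp h3 (fun x hx => (h1 x hx).1)
  · intro x hx
    have hx' := Ioo_subset_Icc_self hx
    have hτ := h1 x hx'
    have := (H.hv (τ x) (hs0.trans hτ.1.1)).comp x (h4 x hx)
    refine this.congr_deriv ?_
    have hN := D.Np (τ x) ⟨hs.1.trans hτ.1.1, hτ.1.2⟩
    rw [hτ.2] at hN ⊢
    field_simp
    ring

lemma Dderiv_id {x e0 μ w1 w2 N1 N2 g : ℝ} (h1 : N1 ≠ 0) (h2 : N2 ≠ 0)
    (hg : N2 - N1 = g * (w1 - w2)) :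
    2 * (w1 - w2) * (((x - (e0 - μ * w1)) / N1 - 1) - ((x - (e0 - μ * w2)) / N2 - 1)) =
    2 * (w1 - w2) ^ 2 * (μ / N1 + (x - (e0 - μ * w2)) * g / (N1 * N2)) := by
  have : N2 = N1 + g * (w1 - w2) := by linarith
  field_simp
  rw [this]
  ring

set_option maxHeartbeats 1000000 in
lemma contr2 (H1 : S.Sol ε e0 μ u1 v1) (H2 : S.Sol ε e0 μ u2 v2) (P : S.Par ρ δ ε e0 μ)
    (C : S.Cond c T0 u0 m er δ) {te1 te2 s1 s2 uL : ℝ} (D1 : S.Desc ρ δ ε e0 μ u0 T0 te1 u1 v1)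
    (D2 : S.Desc ρ δ ε e0 μ u0 T0 te2 u2 v2)
    (hv1 : 0 < v1 0) (hv2 : 0 < v2 0)
    (hs1 : s1 ∈ Icc T0 te1) (hs2 : s2 ∈ Icc T0 te2)
    (hus1 : u1 s1 = uL) (hus2 : u2 s2 = uL) (huL : δ < uL) :
    (v1 te1 - v2 te2) ^ 2 ≤ (v1 s1 - v2 s2) ^ 2 * (δ / uL) ^ S.lam * Real.exp S.Kc := by
  have hδ := P.hδ
  have hρδ := mul_pos P.hρ P.hδ
  have hρδ6 : ρ * δ ≤ δ / 6 := by nlinarith [P.hρ6]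
  have hu0 := C.hu0
  have hgM := S.gM_pos
  have hn0 := S.n0_pos
  have hvl1 := H1.vlow P hv1
  have hvl2 := H2.vlow P hv2
  obtain ⟨τ1, ha1, hb1, hc1, hd1, he1⟩ := graph H1 C.hT0 D1 hs1 hus1
  obtain ⟨τ2, ha2, hb2, hc2, hd2, he2⟩ := graph H2 C.hT0 D2 hs2 hus2
  set w1 := fun x => v1 (τ1 x) with hw1
  set w2 := fun x => v2 (τ2 x) with hw2
  set D := fun x => (w1 x - w2 x) ^ 2 with hD
  set G := fun x => μ / S.N ε x (w1 x) + (x - (e0 - μ * w2 x)) * (S.g0 - S.σ * S.R (x / ε)) /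
    (S.N ε x (w1 x) * S.N ε x (w2 x)) with hG
  have hDc : ContinuousOn D (Icc (-u0) uL) := (hd1.sub hd2).pow 2
  have hNp1 : ∀ x ∈ Icc (-u0) uL, 0 < S.N ε x (w1 x) := by
    intro x hx
    have := D1.Np _ (ha1 x hx).1
    rwa [(ha1 x hx).2] at this
  have hNp2 : ∀ x ∈ Icc (-u0) uL, 0 < S.N ε x (w2 x) := by
    intro x hx
    have := D2.Np _ (ha2 x hx).1
    rwa [(ha2 x hx).2] at this
  have hDd : ∀ x ∈ Ioo (-u0) uL, HasDerivAt D (2 * D x * G x) x := by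
    intro x hx
    have hx' := Ioo_subset_Icc_self hx
    have := ((he1 x hx).sub (he2 x hx)).pow 2
    refine this.congr_deriv ?_
    have h := Dderiv_id (x := x) (e0 := e0) (μ := μ) (w1 := w1 x) (w2 := w2 x)
      (g := S.g0 - S.σ * S.R (x / ε)) (hNp1 x hx').ne' (hNp2 x hx').ne'
      (by unfold N y; ring)
    rw [hD, hG]
    rw [← h]
    simp [hw1, hw2]
  have hDnn : ∀ x, 0 ≤ D x := fun x => sq_nonneg _
  -- bounds on e
  have he : ∀ x ∈ Icc (-u0) uL, e0 - μ * w2 x ≤ 3 / 2 * (ρ * δ) := fun x hx =>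
    Sol.e_le P (hvl2 _ (C.hT0.trans (ha2 x hx).1.1))
  have hgpos : ∀ x, 0 < S.g0 - S.σ * S.R (x / ε) := fun x => S.hgm.trans_le (S.hg1 _)
  -- region u ≥ δ
  have hNu : ∀ x, δ ≤ x → ∀ w, - (2 * ρ * δ / S.g0) < w → 0 ≤ S.y w → S.y w ≤ S.yM →
      S.N ε x w ≤ S.C' * x := by
    intro x hx w hw hy0 hy
    have h1 := P.Rhi hx
    have h2 : S.R (x / ε) * S.y w ≤ S.c2 * δ * S.yM :=
      mul_le_mul h1 hy hy0 (by have := S.hc2; positivity)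
    have h3 : - (2 * ρ * δ) < S.g0 * w := by
      have := mul_lt_mul_of_pos_left hw S.hg0
      have e : S.g0 * -(2 * ρ * δ / S.g0) = - (2 * ρ * δ) := by
        have := S.hg0.ne'
        field_simp
      linarith
    have h4 : S.c2 * S.yM * δ ≤ S.c2 * S.yM * x :=
      mul_le_mul_of_nonneg_left hx (mul_pos S.hc2 S.hyM0).le
    unfold N C'
    linarith
  have k1 : D δ ≤ D uL * (δ / uL) ^ S.lam := by
    refine pow_contr hδ huL.le (hDc.mono (Icc_subset_Icc (by linarith) le_rfl))
      (fun x hx => hDd x ⟨by linarith [hx.1], hx.2⟩) ?_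
    intro x hx
    have hx' : x ∈ Icc (-u0) uL := ⟨by linarith [hx.1], hx.2.le⟩
    have hx0 : 0 < x := hδ.trans hx.1
    have t1 := (C.hT0.trans (ha1 x hx').1.1)
    have t2 := (C.hT0.trans (ha2 x hx').1.1)
    have n1 := hNu x hx.1.le (w1 x) (hvl1 _ t1) (H1.mono_ym t1).le (H1.hy2 _ t1)
    have n2 := hNu x hx.1.le (w2 x) (hvl2 _ t2) (H2.mono_ym t2).le (H2.hy2 _ t2)
    have p1 := hNp1 x hx'
    have p2 := hNp2 x hx'
    have hC := S.C'_pos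
    have hGx : S.lam / (2 * x) ≤ G x := by
      have a1 : 0 ≤ μ / S.N ε x (w1 x) := div_nonneg P.hμ0 p1.le
      have a2 : S.lam / (2 * x) = (x / 2 * S.gm) / ((S.C' * x) * (S.C' * x)) := by
        unfold lam; field_simp
      have a3 : (x / 2 * S.gm) / ((S.C' * x) * (S.C' * x)) ≤
        (x - (e0 - μ * w2 x)) * (S.g0 - S.σ * S.R (x / ε)) /
          (S.N ε x (w1 x) * S.N ε x (w2 x)) := by
        have b1 : x / 2 ≤ x - (e0 - μ * w2 x) := by
          have := he x hx'; linarith [hx.1]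
        have b2 := S.hg1 (x / ε)
        have b3 := S.hgm
        have b4 : 0 ≤ x - (e0 - μ * w2 x) := by linarith
        have b5 : 0 ≤ (x - (e0 - μ * w2 x)) * (S.g0 - S.σ * S.R (x / ε)) :=
          mul_nonneg b4 (hgpos x).le
        gcongr
      rw [a2]
      simp only [hG]
      linarith
    calc S.lam * D x / x = 2 * D x * (S.lam / (2 * x)) := by field_simp
      _ ≤ _ := by
        apply mul_le_mul_of_nonneg_left hGx
        have := hDnn x; linarith
  have h2ρ : 2 * ρ * δ ≤ δ := by linarith
  have h2ρ0 : 0 < 2 * ρ * δ := by linarith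
  have k2 : D (2 * ρ * δ) ≤ D δ := by
    refine mono_of h2ρ (hDc.mono (Icc_subset_Icc (by linarith) huL.le))
      (fun x hx => hDd x ⟨by linarith [hx.1], by linarith [hx.2]⟩) ?_
    intro x hx
    have hx' : x ∈ Icc (-u0) uL := ⟨by linarith [hx.1], by linarith [hx.2]⟩
    have p1 := hNp1 x hx'
    have p2 := hNp2 x hx'
    have hGx : 0 ≤ G x := by
      have a1 : 0 ≤ μ / S.N ε x (w1 x) := div_nonneg P.hμ0 p1.le
      have b1 : 0 ≤ x - (e0 - μ * w2 x) := by
        have := he x hx'; linarith [hx.1]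
      have := hgpos x
      simp only [hG]
      positivity
    have := hDnn x
    positivity
  have k3 : D 0 ≤ D (2 * ρ * δ) * Real.exp (S.gM / (2 * δ) * (2 * ρ * δ - 0)) := by
    refine gron_back h2ρ0.le (hDc.mono (Icc_subset_Icc (by linarith) (by linarith)))
      (fun x hx => hDd x ⟨by linarith [hx.1], by linarith [hx.2]⟩) ?_
    intro x hx
    have hx' : x ∈ Icc (-u0) uL := ⟨by linarith [hx.1], by linarith [hx.2]⟩
    have p1 := D1.N2 _ (ha1 x hx').1 (by rw [(ha1 x hx').2]; exact hx.2)
    have p2 := D2.N2 _ (ha2 x hx').1 (by rw [(ha2 x hx').2]; exact hx.2)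
    rw [(ha1 x hx').2] at p1
    rw [(ha2 x hx').2] at p2
    have hGx : - (S.gM / (4 * δ)) ≤ G x := by
      have a1 : 0 ≤ μ / S.N ε x (w1 x) := div_nonneg P.hμ0 (hNp1 x hx').le
      have b1 : -δ ≤ x - (e0 - μ * w2 x) := by
        have := he x hx'; linarith [hx.1]
      have b2 := hgpos x
      have b3 := S.hg2 (x / ε)
      have q1 : 0 < S.N ε x (w1 x) * S.N ε x (w2 x) := mul_pos (hNp1 x hx') (hNp2 x hx')
      have q2 : 4 * δ * δ ≤ S.N ε x (w1 x) * S.N ε x (w2 x) := by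
        calc 4 * δ * δ = (2 * δ) * (2 * δ) := by ring
          _ ≤ _ := mul_le_mul p1 p2 (by linarith) (hNp1 x hx').le
      have a3 : - (S.gM / (4 * δ)) ≤ (x - (e0 - μ * w2 x)) * (S.g0 - S.σ * S.R (x / ε)) /
          (S.N ε x (w1 x) * S.N ε x (w2 x)) := by
        rw [le_div_iff₀ q1]
        have r1 : -(δ * S.gM) ≤ (x - (e0 - μ * w2 x)) * (S.g0 - S.σ * S.R (x / ε)) := by
          nlinarith
        have r2 : S.gM / (4 * δ) * (4 * δ * δ) ≤
            S.gM / (4 * δ) * (S.N ε x (w1 x) * S.N ε x (w2 x)) :=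
          mul_le_mul_of_nonneg_left q2 (by positivity)
        have r3 : S.gM / (4 * δ) * (4 * δ * δ) = δ * S.gM := by field_simp
        linarith
      simp only [hG]
      linarith
    have e1 : - (S.gM / (2 * δ)) * D x = 2 * D x * (- (S.gM / (4 * δ))) := by
      field_simp; ring
    rw [e1]
    apply mul_le_mul_of_nonneg_left hGx
    have := hDnn x; linarith
  have k4 : D (-u0) ≤ D 0 * Real.exp (4 * S.gM / S.n0 ^ 2 * (0 - (-u0))) := by
    refine gron_back (by linarith) (hDc.mono (Icc_subset_Icc le_rfl (by linarith)))
      (fun x hx => hDd x ⟨by linarith [hx.1], by linarith [hx.2]⟩) ?_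
    intro x hx
    have hx' : x ∈ Icc (-u0) uL := ⟨by linarith [hx.1], by linarith [hx.2]⟩
    have p1 := D1.N3 _ (ha1 x hx').1 (by rw [(ha1 x hx').2]; exact hx.2.le)
    have p2 := D2.N3 _ (ha2 x hx').1 (by rw [(ha2 x hx').2]; exact hx.2.le)
    rw [(ha1 x hx').2] at p1
    rw [(ha2 x hx').2] at p2
    have hGx : - (2 * S.gM / S.n0 ^ 2) ≤ G x := by
      have a1 : 0 ≤ μ / S.N ε x (w1 x) := div_nonneg P.hμ0 (hNp1 x hx').le
      have b1 : -2 ≤ x - (e0 - μ * w2 x) := by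
        have := he x hx'
        have := C.hu01; have := P.hδ1
        linarith [hx.1]
      have b2 := hgpos x
      have b3 := S.hg2 (x / ε)
      have q1 : 0 < S.N ε x (w1 x) * S.N ε x (w2 x) := mul_pos (hNp1 x hx') (hNp2 x hx')
      have q2 : S.n0 ^ 2 ≤ S.N ε x (w1 x) * S.N ε x (w2 x) := by
        calc S.n0 ^ 2 = S.n0 * S.n0 := by ring
          _ ≤ _ := mul_le_mul p1 p2 hn0.le (hNp1 x hx').le
      have a3 : - (2 * S.gM / S.n0 ^ 2) ≤ (x - (e0 - μ * w2 x)) * (S.g0 - S.σ * S.R (x / ε)) /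
          (S.N ε x (w1 x) * S.N ε x (w2 x)) := by
        rw [le_div_iff₀ q1]
        have r1 : -(2 * S.gM) ≤ (x - (e0 - μ * w2 x)) * (S.g0 - S.σ * S.R (x / ε)) := by
          nlinarith
        have r2 : 2 * S.gM / S.n0 ^ 2 * S.n0 ^ 2 ≤
            2 * S.gM / S.n0 ^ 2 * (S.N ε x (w1 x) * S.N ε x (w2 x)) :=
          mul_le_mul_of_nonneg_left q2 (by positivity)
        have r3 : 2 * S.gM / S.n0 ^ 2 * S.n0 ^ 2 = 2 * S.gM := by field_simp
        linarith
      simp only [hG]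
      linarith
    have e1 : - (4 * S.gM / S.n0 ^ 2) * D x = 2 * D x * (- (2 * S.gM / S.n0 ^ 2)) := by
      ring
    rw [e1]
    apply mul_le_mul_of_nonneg_left hGx
    have := hDnn x; linarith
  have x1 : Real.exp (S.gM / (2 * δ) * (2 * ρ * δ - 0)) ≤ Real.exp (S.gM / 2) := by
    apply Real.exp_le_exp.2
    have : S.gM / (2 * δ) * (2 * ρ * δ - 0) = S.gM * ρ := by field_simp; ring
    rw [this]
    nlinarith [P.hρ6]
  have x2 : Real.exp (4 * S.gM / S.n0 ^ 2 * (0 - (-u0))) ≤ Real.exp (4 * S.gM / S.n0 ^ 2) := by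
    apply Real.exp_le_exp.2
    have : 0 ≤ 4 * S.gM / S.n0 ^ 2 := by positivity
    have := C.hu01
    nlinarith
  have f1 : D (-u0) = (v1 te1 - v2 te2) ^ 2 := by simp only [hD, hw1, hw2, hb1, hb2]
  have f2 : D uL = (v1 s1 - v2 s2) ^ 2 := by simp only [hD, hw1, hw2, hc1, hc2]
  rw [← f1, ← f2]
  have f3 : 0 ≤ D uL * (δ / uL) ^ S.lam := (hDnn _).trans k1
  calc D (-u0) ≤ D 0 * Real.exp (4 * S.gM / S.n0 ^ 2) :=
        k4.trans (mul_le_mul_of_nonneg_left x2 (hDnn 0))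
    _ ≤ (D uL * (δ / uL) ^ S.lam * Real.exp (S.gM / 2)) * Real.exp (4 * S.gM / S.n0 ^ 2) := by
        apply mul_le_mul_of_nonneg_right _ (Real.exp_pos _).le
        exact k3.trans (mul_le_mul (k2.trans k1) x1 (Real.exp_pos _).le f3)
    _ = _ := by unfold Kc; rw [Real.exp_add]; ring

lemma contr_aux (H1 : S.Sol ε e0 μ u1 v1) (H2 : S.Sol ε e0 μ u2 v2) (P : S.Par ρ δ ε e0 μ)
    (C : S.Cond c T0 u0 m er δ) {te1 te2 : ℝ} (D1 : S.Desc ρ δ ε e0 μ u0 T0 te1 u1 v1)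
    (D2 : S.Desc ρ δ ε e0 μ u0 T0 te2 u2 v2)
    (hu1 : u1 0 = u0) (hv1 : |v1 0 - S.v0| ≤ 3 * u0)
    (hu2 : u2 0 = u0) (hv2 : |v2 0 - S.v0| ≤ 3 * u0) (hle : u2 T0 ≤ u1 T0) :
    (v1 te1 - v2 te2) ^ 2 ≤ 1 / 4 * (v1 0 - v2 0) ^ 2 := by
  have h0 := contr0 H1 H2 P C hu1 hv1 hu2 hv2
  have hv0 := S.hv0
  have hp1 : 0 < v1 0 := by have := Sol.v0pos C hv1; linarith
  have hp2 : 0 < v2 0 := by have := Sol.v0pos C hv2; linarith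
  have a2 := (H2.atT0 P C hu2 hv2).2
  have hδu := C.hδu
  have hδ := P.hδ
  have hcl : u1 T0 - u2 T0 ≤ 2 * er := by
    have b1 := (abs_le.1 (H1.close P C hu1 hv1 T0 ⟨C.hT0, le_rfl⟩).1).2
    have b2 := (abs_le.1 (H2.close P C hu2 hv2 T0 ⟨C.hT0, le_rfl⟩).1).1
    linarith
  obtain ⟨s1, hs1, hus1, hws⟩ := contr1 H1 P C D1 hu1 hv1 (uL := u2 T0) (by linarith) hle hcl
  have h2 := contr2 H1 H2 P C D1 D2 hp1 hp2 hs1 ⟨le_rfl, D2.hte.le⟩ hus1 rfl (by linarith)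
  set A := u1 T0 - u2 T0
  set B := v1 T0 - v2 T0 with hB
  have hA : 0 ≤ A := sub_nonneg.2 hle
  have hq0 : 0 ≤ S.q T0 := by
    have := C.hng; have := C.hgu
    unfold q; positivity
  have hd : |v1 s1 - v2 T0| ≤ (1 + S.q T0) * A + |B| := by
    have e : v1 s1 - v2 T0 = ((u1 s1 + v1 s1) - (u1 T0 + v1 T0)) + A + B := by
      rw [hus1]; ring
    rw [e]
    refine (abs_add_three _ _ _).trans ?_
    rw [abs_of_nonneg hA]
    linarith
  have hd2 : (v1 s1 - v2 T0) ^ 2 ≤ 2 * (1 + S.q T0) ^ 2 * (A ^ 2 + B ^ 2) := by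
    have h1 : (v1 s1 - v2 T0) ^ 2 ≤ ((1 + S.q T0) * A + |B|) ^ 2 := by
      rw [← sq_abs (v1 s1 - v2 T0)]
      exact pow_le_pow_left₀ (abs_nonneg _) hd 2
    have h3 := sq_abs B
    have h4 : |B| ≤ (1 + S.q T0) * |B| := by nlinarith [abs_nonneg B]
    have h5 : ((1 + S.q T0) * A + |B|) ^ 2 ≤ ((1 + S.q T0) * A + (1 + S.q T0) * |B|) ^ 2 := by
      apply pow_le_pow_left₀ (by positivity); linarith
    have h6 : ((1 + S.q T0) * A + (1 + S.q T0) * |B|) ^ 2 = (1 + S.q T0) ^ 2 * (A + |B|) ^ 2 := by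
      ring
    have h7 : (A + |B|) ^ 2 ≤ 2 * (A ^ 2 + B ^ 2) := by nlinarith [sq_nonneg (A - |B|)]
    have h8 : (1 + S.q T0) ^ 2 * (A + |B|) ^ 2 ≤ (1 + S.q T0) ^ 2 * (2 * (A ^ 2 + B ^ 2)) :=
      mul_le_mul_of_nonneg_left h7 (sq_nonneg _)
    linarith
  have hr : (δ / u2 T0) ^ S.lam ≤ (δ / (S.gu T0 / 2)) ^ S.lam := by
    have := C.hgu
    apply Real.rpow_le_rpow (by apply div_nonneg hδ.le; linarith) _ S.lam_pos.le
    exact div_le_div_of_nonneg_left hδ.le (by positivity) a2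
  set X := (δ / (S.gu T0 / 2)) ^ S.lam
  have hX : 0 ≤ X := Real.rpow_nonneg (by have := C.hgu; positivity) _
  calc (v1 te1 - v2 te2) ^ 2 ≤ _ := h2
    _ ≤ (2 * (1 + S.q T0) ^ 2 * ((v1 0 - v2 0) ^ 2 * Real.exp ((S.g0 + 4) * T0))) * X
        * Real.exp S.Kc := by
      apply mul_le_mul_of_nonneg_right _ (Real.exp_pos _).le
      apply mul_le_mul _ hr _ (by positivity)
      · exact hd2.trans (mul_le_mul_of_nonneg_left h0 (by positivity))
      · apply Real.rpow_nonneg; apply div_nonneg hδ.le; linarith [C.hgu]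
    _ = (Real.exp S.Kc * X * (2 * (1 + S.q T0) ^ 2 * Real.exp ((S.g0 + 4) * T0)))
        * (v1 0 - v2 0) ^ 2 := by ring
    _ ≤ _ := mul_le_mul_of_nonneg_right C.hfin (sq_nonneg _)

lemma contr (H1 : S.Sol ε e0 μ u1 v1) (H2 : S.Sol ε e0 μ u2 v2) (P : S.Par ρ δ ε e0 μ)
    (C : S.Cond c T0 u0 m er δ) {te1 te2 : ℝ} (D1 : S.Desc ρ δ ε e0 μ u0 T0 te1 u1 v1)
    (D2 : S.Desc ρ δ ε e0 μ u0 T0 te2 u2 v2)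
    (hu1 : u1 0 = u0) (hv1 : |v1 0 - S.v0| ≤ 3 * u0)
    (hu2 : u2 0 = u0) (hv2 : |v2 0 - S.v0| ≤ 3 * u0) :
    |v1 te1 - v2 te2| ≤ 1 / 2 * |v1 0 - v2 0| := by
  have key : (v1 te1 - v2 te2) ^ 2 ≤ 1 / 4 * (v1 0 - v2 0) ^ 2 := by
    rcases le_total (u2 T0) (u1 T0) with h | h
    · exact contr_aux H1 H2 P C D1 D2 hu1 hv1 hu2 hv2 h
    · have := contr_aux H2 H1 P C D2 D1 hu2 hv2 hu1 hv1 h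
      nlinarith
  apply abs_le_of_sq_le_sq _ (by positivity)
  rw [mul_pow, sq_abs]
  linarith

end HS
end SDO

namespace SDO
open Set
namespace HS

variable {S : HS}

lemma gv_pos (S : HS) (t : ℝ) : 0 < S.gv t := by
  have hd : ∀ s, HasDerivAt (fun s => S.gv s * Real.exp (S.g0 * s)) 0 s := by
    intro s
    have h2 : HasDerivAt (fun t : ℝ => Real.exp (S.g0 * t))
          (Real.exp (S.g0 * s) * (S.g0 * 1)) s := ((hasDerivAt_id s).const_mul S.g0).exp
    refine ((S.hgv s).mul h2).congr_deriv ?_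
    ring
  have h := is_const_of_deriv_eq_zero (fun s => (hd s).differentiableAt) (fun s => (hd s).deriv) t 0
  simp only [mul_zero, Real.exp_zero, mul_one, S.hgv0] at h
  have h1 := S.hv0
  rw [← h] at h1
  exact pos_of_mul_pos_left h1 (Real.exp_pos _).le

lemma gu_pos (S : HS) {t : ℝ} (ht : 0 < t) : 0 < S.gu t := by
  have hd : ∀ s, HasDerivAt (fun s => S.gu s * Real.exp s) (S.g0 * S.gv s * Real.exp s) s := by
    intro s
    refine ((S.hgu s).mul (Real.hasDerivAt_exp s)).congr_deriv ?_
    ring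
  have hm : StrictMono (fun s => S.gu s * Real.exp s) := by
    apply strictMono_of_deriv_pos
    intro s
    rw [(hd s).deriv]
    have := S.gv_pos s; have := S.hg0; positivity
  have := hm ht
  simp only [S.hgu0, zero_mul] at this
  exact pos_of_mul_pos_left this (Real.exp_pos _).le

lemma ng_pos (S : HS) : ∃ t0, 0 < t0 ∧ ∀ t, t0 ≤ t → 0 < S.ng t := by
  have hex : ∃ t, 1 ≤ t ∧ 0 < S.ng t := by
    by_contra hcon
    push Not at hcon
    have hge : ∀ t, 1 ≤ t → S.gu 1 ≤ S.gu t := by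
      intro t ht
      exact mono_of' ht (fun s _ => S.hgu s)
        (fun s hs => by have := hcon s hs.1; unfold ng at this; linarith)
    have := ge_of_tendsto S.hlimu (eventually_atTop.2 ⟨1, hge⟩)
    linarith [S.gu_pos one_pos]
  obtain ⟨t0, h1, h2⟩ := hex
  refine ⟨t0, by linarith, fun t ht => ?_⟩
  have hd : ∀ s, HasDerivAt (fun s => S.ng s * Real.exp s)
      (S.g0 ^ 2 * S.gv s * Real.exp s) s := by
    intro s
    have hn : HasDerivAt S.ng ((S.g0 * S.gv s - S.gu s) - S.g0 * (-(S.g0 * S.gv s))) s :=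
      (S.hgu s).sub ((S.hgv s).const_mul S.g0)
    refine (hn.mul (Real.hasDerivAt_exp s)).congr_deriv ?_
    unfold ng; ring
  have := mono_of' ht (fun s _ => hd s)
    (fun s _ => by have := S.gv_pos s; have := S.hg0; positivity)
  have h3 : 0 < S.ng t0 * Real.exp t0 := mul_pos h2 (Real.exp_pos _)
  exact pos_of_mul_pos_left (h3.trans_le this) (Real.exp_pos _).le

lemma ev {f : ℝ → ℝ} (hf : Continuous f) {b : ℝ} (h : f 0 < b) : ∀ᶠ δ in 𝓝[>] (0:ℝ), f δ < b :=
  (hf.continuousAt.eventually (gt_mem_nhds h)).filter_mono nhdsWithin_le_nhds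

lemma exists_cond (S : HS) {c : ℝ} (hc : 0 < c) : ∃ T0 er, ∀ᶠ u0 in 𝓝[>] (0:ℝ), ∃ m,
    ∀ᶠ δ in 𝓝[>] (0:ℝ), S.Cond c T0 u0 m er δ := by
  obtain ⟨t0, ht0, hng⟩ := S.ng_pos
  have e1 : ∀ᶠ s in atTop, |S.gu s| < c / 8 := by
    have := S.hlimu.abs
    rw [abs_zero] at this
    exact this.eventually (gt_mem_nhds (by positivity))
  have e2 : ∀ᶠ s in atTop, |S.gv s| < c / 8 := by
    have := S.hlimv.abs
    rw [abs_zero] at this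
    exact this.eventually (gt_mem_nhds (by positivity))
  obtain ⟨t1, ht1⟩ := eventually_atTop.1 (e1.and e2)
  set T0 := max t0 t1 with hT0
  have hT0p : 0 < T0 := ht0.trans_le (le_max_left _ _)
  have hgu := S.gu_pos hT0p
  have hng := hng T0 (le_max_left _ _)
  have hg := S.hg0
  have hgM := S.gM_pos
  have hv0 := S.hv0
  have hn0 := S.n0_pos
  obtain ⟨er, her0, h1, h2, h3, h4, h5⟩ : ∃ er, 0 < er ∧ er ≤ S.gu T0 / 2 ∧
      (1 + S.g0) * er ≤ S.ng T0 / 2 ∧ (1 + S.gM) * (2 * er) ≤ S.ng T0 / 4 ∧ er ≤ 1 ∧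
      er ≤ c / 8 := by
    have a1 := ev (f := fun er => er) continuous_id (show (0:ℝ) < S.gu T0 / 2 by positivity)
    have a2 := ev (f := fun er => (1 + S.g0) * er) (by fun_prop)
      (show (1 + S.g0) * 0 < S.ng T0 / 2 by rw [mul_zero]; positivity)
    have a3 := ev (f := fun er => (1 + S.gM) * (2 * er)) (by fun_prop)
      (show (1 + S.gM) * (2 * 0) < S.ng T0 / 4 by simp; positivity)
    have a4 := ev (f := fun er => er) continuous_id (show (0:ℝ) < 1 by positivity)
    have a5 := ev (f := fun er => er) continuous_id (show (0:ℝ) < c / 8 by positivity)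
    have a6 : ∀ᶠ er in 𝓝[>] (0:ℝ), 0 < er := self_mem_nhdsWithin
    obtain ⟨er, b⟩ := (a1.and (a2.and (a3.and (a4.and (a5.and a6))))).exists
    obtain ⟨b1, b2, b3, b4, b5, b6⟩ := b
    exact ⟨er, b6, b1.le, b2.le, b3.le, b4.le, b5.le⟩
  refine ⟨T0, er, ?_⟩
  have c0 : ∀ᶠ u0 in 𝓝[>] (0:ℝ), 0 < u0 := self_mem_nhdsWithin
  have c1 := ev (f := fun er => er) continuous_id (show (0:ℝ) < 1 by positivity)
  have c2 := ev (f := fun u0 => 7 * u0) (by fun_prop) (show 7 * (0:ℝ) < S.v0 by rw [mul_zero]; positivity)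
  have c3 := ev (f := fun u0 => 11 * u0 ^ 2 * Real.exp ((S.g0 + 1) * T0)) (by fun_prop)
    (show 11 * 0 ^ 2 * Real.exp ((S.g0 + 1) * T0) < er ^ 2 by simp; positivity)
  have c4 := ev (f := fun u0 => u0 + S.g0 * (S.M * 0 + 2 * u0)) (by fun_prop)
    (show 0 + S.g0 * (S.M * 0 + 2 * 0) < S.n0 by simp; positivity)
  have c5 := ev (f := fun er => er) continuous_id (show (0:ℝ) < S.n0 by positivity)
  have c6 := ev (f := fun er => er) continuous_id (show (0:ℝ) < c / 8 by positivity)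
  filter_upwards [c0, c1, c2, c3, c4, c5, c6] with u0 d0 d1 d2 d3 d4 d5 d6
  have hLm := S.Lm_pos T0
  refine ⟨min (u0 / 2) (S.g0 * S.Lm T0 / 4), ?_⟩
  set m := min (u0 / 2) (S.g0 * S.Lm T0 / 4) with hm
  have hm0 : 0 < m := by rw [hm, lt_min_iff]; constructor <;> positivity
  have f0 : ∀ᶠ δ in 𝓝[>] (0:ℝ), 0 < δ := self_mem_nhdsWithin
  have f1 := ev (f := fun er => er) continuous_id hm0
  have f2 := ev (f := fun δ => S.c2 * δ * S.yM) (by fun_prop)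
    (show S.c2 * 0 * S.yM < S.g0 * S.Lm T0 / 4 by simp; positivity)
  have f3 := ev (f := fun δ => δ * (1 + S.v0)) (by fun_prop)
    (show 0 * (1 + S.v0) < S.g0 * S.Lm T0 by simp; positivity)
  have f4 := ev (f := fun δ => 2 * ((S.c2 * S.yM + 1 + S.Vb) * δ) ^ 2) (by fun_prop)
    (show 2 * ((S.c2 * S.yM + 1 + S.Vb) * 0) ^ 2 < u0 ^ 2 by simp; positivity)
  have f5 := ev (f := fun er => er) continuous_id (show 0 < S.gu T0 / 2 by positivity)
  have f6 := ev (f := fun δ => u0 + S.g0 * (S.M * δ + 2 * u0)) (by fun_prop) d4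
  have f7 := ev (f := fun δ => 2 * δ) (by fun_prop) (show 2 * 0 < S.n0 by simp; positivity)
  have f8 := ev (f := fun δ => u0 + δ) (by fun_prop) (show u0 + 0 < S.n0 by simpa)
  have f9 := ev (f := fun δ => S.M * δ) (by fun_prop) (show S.M * 0 < u0 by simpa)
  have f10 := ev (f := fun er => er) continuous_id (show 0 < S.g0 * u0 by positivity)
  have f11 := ev (f := fun δ => S.c2 * δ) (by fun_prop) (show S.c2 * 0 < 1 by simp)
  have f12 := ev (f := fun δ => S.L * δ * S.yM) (by fun_prop)
    (show S.L * 0 * S.yM < m ^ 2 by simp; positivity)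
  have hl := S.lam_pos
  have f13 := ev (f := fun δ => Real.exp S.Kc * (δ / (S.gu T0 / 2)) ^ S.lam *
    (2 * (1 + S.q T0) ^ 2 * Real.exp ((S.g0 + 4) * T0)))
    (((continuous_const.mul ((continuous_id.div_const _).rpow_const
      (fun _ => Or.inr hl.le))).mul continuous_const))
    (b := 1 / 4) (by
      rw [zero_div, Real.zero_rpow hl.ne']; norm_num)
  filter_upwards [f0, f1, f2, f3, f4, f5, f6, f7, f8, f9, f10, f11, f12, f13] with δ g0 g1 g2 g3 g4 g5 g6 g7 g8 g9 g10 g11 g12 g13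
  exact
  { hT0 := hT0p.le, hgu := hgu, hng := hng, hu0 := d0, hu01 := d1.le, hu0v := d2.le, hm := hm0
    hmu := (min_le_left _ _).trans_lt (by linarith), hmL := min_le_right _ _
    hδ0 := g0, hδm := g1.le, hδL := g2.le, hδL2 := g3.le, hω := g4.le, her0 := her0, her := d3.le
    heru := h1, hern := h2, hern2 := h3, her1 := h4, hδu := g5, hδn := g6.le, hδn2 := g7.le
    hδn3 := g8, hδM := g9, hδg := g10.le, hu0c := d6.le, herc := h5
    hguc := fun s hs => (ht1 s ((le_max_right _ _).trans hs)).1.le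
    hgvc := fun s hs => (ht1 s ((le_max_right _ _).trans hs)).2.le
    hδc := g11.le, hδl := g12.le, hfin := g13.le }

/-- Summary of the half-passage. -/
structure Half (S : HS) (c u0 Tm ε e0 μ : ℝ) : Prop where
  pass : ∀ u v, S.Sol ε e0 μ u v → u 0 = u0 → |v 0 - S.v0| ≤ 3 * u0 →
    ∃ T, 0 < T ∧ T ≤ Tm ∧ u T = - u0 ∧ (∀ t ∈ Ico 0 T, - u0 < u t) ∧ |v T| < 3 * u0 ∧
      0 < S.N ε (u T) (v T) ∧
      (∀ t ∈ Icc 0 T, ∃ s, 0 ≤ s ∧ |u t - S.gu s| ≤ c ∧ |v t - S.gv s| ≤ c) ∧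
      (∀ s, 0 ≤ s → ∃ t ∈ Icc 0 T, |u t - S.gu s| ≤ c ∧ |v t - S.gv s| ≤ c)
  contr : ∀ u1 v1 u2 v2 T1 T2, S.Sol ε e0 μ u1 v1 → S.Sol ε e0 μ u2 v2 →
    u1 0 = u0 → |v1 0 - S.v0| ≤ 3 * u0 → u2 0 = u0 → |v2 0 - S.v0| ≤ 3 * u0 →
    0 ≤ T1 → u1 T1 = -u0 → (∀ t ∈ Ico 0 T1, - u0 < u1 t) →
    0 ≤ T2 → u2 T2 = -u0 → (∀ t ∈ Ico 0 T2, - u0 < u2 t) →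
    |v1 T1 - v2 T2| ≤ 1 / 2 * |v1 0 - v2 0|

lemma first_unique {u : ℝ → ℝ} {a T T' : ℝ} (h0 : 0 ≤ T) (h : u T = a)
    (hf : ∀ t ∈ Ico 0 T, a < u t) (h0' : 0 ≤ T') (h' : u T' = a)
    (hf' : ∀ t ∈ Ico 0 T', a < u t) : T = T' := by
  rcases lt_trichotomy T T' with hl | hl | hl
  · have := hf' T ⟨h0, hl⟩; linarith
  · exact hl
  · have := hf T' ⟨h0', hl⟩; linarith

lemma half_of {ρ δ ε e0 μ c T0 u0 m er : ℝ} (P : S.Par ρ δ ε e0 μ)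
    (C : S.Cond c T0 u0 m er δ) : S.Half c u0 (S.Tmax T0 ρ δ) ε e0 μ := by
  constructor
  · intro u v H hu hv
    obtain ⟨te, hte, D, hA, hB⟩ := H.desc P C hu hv
    have hT := C.hT0
    exact ⟨te, hT.trans_lt D.hte, hte, D.ute, D.first, D.vte, D.Np te ⟨D.hte.le, le_rfl⟩, hA, hB⟩
  · intro u1 v1 u2 v2 T1 T2 H1 H2 hu1 hv1 hu2 hv2 a1 a2 a3 b1 b2 b3
    obtain ⟨te1, _, D1, _⟩ := H1.desc P C hu1 hv1
    obtain ⟨te2, _, D2, _⟩ := H2.desc P C hu2 hv2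
    have hT := C.hT0
    have e1 := first_unique a1 a2 a3 (hT.trans D1.hte.le) D1.ute D1.first
    have e2 := first_unique b1 b2 b3 (hT.trans D2.hte.le) D2.ute D2.first
    rw [e1, e2]
    exact HS.contr H1 H2 P C D1 D2 hu1 hv1 hu2 hv2

lemma exists_half (S : HS) {c : ℝ} (hc : 0 < c) : ∀ᶠ u0 in 𝓝[>] (0:ℝ),
    ∀ᶠ δ in 𝓝[>] (0:ℝ), ∀ ρ ε e0 μ, S.Par ρ δ ε e0 μ → ∃ Tm, S.Half c u0 Tm ε e0 μ := by
  obtain ⟨T0, er, h⟩ := S.exists_cond hc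
  filter_upwards [h] with u0 ⟨m, hm⟩
  filter_upwards [hm] with δ C ρ ε e0 μ P
  exact ⟨_, half_of P C⟩

end HS
end SDO

namespace SDO

open Set NNReal

structure Flow (F : ℝ × ℝ → ℝ × ℝ) (K : ℝ≥0) (Φ : ℝ × ℝ → ℝ → ℝ × ℝ) : Prop where
  lip : LipschitzWith K F
  zero : ∀ p, Φ p 0 = p
  der : ∀ p t, HasDerivAt (Φ p) (F (Φ p t)) t

lemma exists_flow {F : ℝ × ℝ → ℝ × ℝ} {K B : ℝ≥0} (hF : LipschitzWith K F) (hB : ∀ p, ‖F p‖ ≤ B) :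
    ∃ Φ, Flow F K Φ := by
  have hloc : ∀ (p : ℝ × ℝ) (n : ℕ), ∃ α : ℝ → ℝ × ℝ, α 0 = p ∧
      ∀ t ∈ Ioo (-(n:ℝ)) n, HasDerivAt α (F (α t)) t := by
    intro p n
    have hn : (0:ℝ) ≤ n := n.cast_nonneg
    have h0 : (0:ℝ) ∈ Icc (-(n:ℝ)) n := ⟨by linarith, hn⟩
    have hPL : IsPicardLindelof (fun _ => F) (⟨0, h0⟩ : Icc (-(n:ℝ)) n) p (B * n) 0 B K := by
      apply IsPicardLindelof.of_time_independent
      · intro x _; exact hB x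
      · exact hF.lipschitzOnWith
      · simp
    obtain ⟨α, h1, h2⟩ := hPL.exists_eq_forall_mem_Icc_hasDerivWithinAt₀
    refine ⟨α, h1, fun t ht => ?_⟩
    exact (h2 t (Ioo_subset_Icc_self ht)).hasDerivAt (Icc_mem_nhds ht.1 ht.2)
  choose α h0 hd using hloc
  have heq : ∀ p (m n : ℕ), ∀ t ∈ Ioo (-(m:ℝ)) m, t ∈ Ioo (-(n:ℝ)) n → α p m t = α p n t := by
    intro p m n t hm hn
    have hm0 : (0:ℝ) < m := by linarith [hm.1, hm.2]
    have hn0 : (0:ℝ) < n := by linarith [hn.1, hn.2]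
    have := ODE_solution_unique_of_mem_Ioo (v := fun _ => F) (s := fun _ => univ) (K := K)
      (f := α p m) (g := α p n) (t₀ := 0) (a := max (-(m:ℝ)) (-(n:ℝ))) (b := min (m:ℝ) n)
      (fun _ _ => hF.lipschitzOnWith) (by simp [hm0, hn0])
      (fun t ht => ⟨hd p m t ⟨(le_max_left _ _).trans_lt ht.1, ht.2.trans_le (min_le_left _ _)⟩,
        trivial⟩)
      (fun t ht => ⟨hd p n t ⟨(le_max_right _ _).trans_lt ht.1, ht.2.trans_le (min_le_right _ _)⟩,
        trivial⟩) (by rw [h0, h0])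
    exact this ⟨max_lt hm.1 hn.1, lt_min hm.2 hn.2⟩
  have hin : ∀ t : ℝ, t ∈ Ioo (-((⌈|t|⌉₊ + 1 : ℕ):ℝ)) ((⌈|t|⌉₊ + 1 : ℕ):ℝ) := by
    intro t
    have h1 := Nat.le_ceil |t|
    push_cast
    exact ⟨by linarith [neg_abs_le t], by linarith [le_abs_self t]⟩
  refine ⟨fun p t => α p (⌈|t|⌉₊ + 1) t, hF, fun p => h0 p _, fun p t => ?_⟩
  have h := hd p _ t (hin t)
  apply h.congr_of_eventuallyEq
  filter_upwards [Ioo_mem_nhds (hin t).1 (hin t).2] with s hs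
  exact heq p _ _ s (hin s) hs

namespace Flow
variable {F : ℝ × ℝ → ℝ × ℝ} {K : ℝ≥0} {Φ : ℝ × ℝ → ℝ → ℝ × ℝ}

lemma add (H : Flow F K Φ) (p : ℝ × ℝ) (s t : ℝ) : Φ (Φ p s) t = Φ p (t + s) := by
  have h := ODE_solution_unique_univ (v := fun _ => F) (s := fun _ => univ) (K := K)
    (f := Φ (Φ p s)) (g := fun t => Φ p (t + s)) (t₀ := 0)
    (fun _ => H.lip.lipschitzOnWith) (fun t => ⟨H.der _ t, trivial⟩)
    (fun t => ⟨(H.der p (t + s)).comp_add_const t s, trivial⟩) (by simp [H.zero])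
  exact congrFun h t

lemma cont (H : Flow F K Φ) (p : ℝ × ℝ) : Continuous (Φ p) :=
  continuous_iff_continuousAt.2 fun t => (H.der p t).continuousAt

lemma dist_le (H : Flow F K Φ) (p q : ℝ × ℝ) {t : ℝ} (ht : 0 ≤ t) :
    dist (Φ p t) (Φ q t) ≤ dist p q * Real.exp (K * t) := by
  have h := dist_le_of_trajectories_ODE (v := fun _ => F) (K := K) (f := Φ p) (g := Φ q) (a := 0)
    (b := t) (δ := dist p q) (fun _ => H.lip) (H.cont p).continuousOn
    (fun s _ => (H.der p s).hasDerivWithinAt) (H.cont q).continuousOn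
    (fun s _ => (H.der q s).hasDerivWithinAt) (by simp [H.zero]) t ⟨ht, le_rfl⟩
  simpa using h

lemma cont_init (H : Flow F K Φ) {t : ℝ} (ht : 0 ≤ t) : Continuous (fun p => Φ p t) := by
  have : LipschitzWith (Real.exp (K * t)).toNNReal (fun p => Φ p t) := by
    apply LipschitzWith.of_dist_le_mul
    intro p q
    rw [Real.coe_toNNReal _ (Real.exp_pos _).le, mul_comm]
    exact H.dist_le p q ht
  exact this.continuous

lemma per (H : Flow F K Φ) {p : ℝ × ℝ} {T : ℝ} (h : Φ p T = p) : Function.Periodic (Φ p) T := by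
  intro t
  rw [← H.add, h]

structure Ret (F : ℝ × ℝ → ℝ × ℝ) (Φ : ℝ × ℝ → ℝ → ℝ × ℝ) (O : Set (ℝ × ℝ)) (x0 y0 w Tmin Tmax : ℝ) (Tf r : ℝ → ℝ) : Prop where
  hO : IsOpen O
  hinv : ∀ p ∈ O, ∀ t, 0 ≤ t → Φ p t ∈ O
  hJ : ∀ y, |y - y0| ≤ w → (x0, y) ∈ O
  hw : 0 < w
  hTmin : 0 < Tmin
  h1 : ∀ y, |y - y0| ≤ w → Tmin ≤ Tf y
  h2 : ∀ y, |y - y0| ≤ w → Tf y ≤ Tmax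
  h3 : ∀ y, |y - y0| ≤ w → Φ (x0, y) (Tf y) = (x0, r y)
  h4 : ∀ y, |y - y0| ≤ w → |r y - y0| < w
  h5 : ∀ y, |y - y0| ≤ w → 0 < (F (x0, r y)).1
  h6 : ∀ y y', |y - y0| ≤ w → |y' - y0| ≤ w → |r y - r y'| ≤ 1 / 2 * |y - y'|

variable {O : Set (ℝ × ℝ)} {x0 y0 w Tmin Tmax : ℝ} {Tf r : ℝ → ℝ}

lemma Ret.fix (Q : Ret F Φ O x0 y0 w Tmin Tmax Tf r) : ∃ ys, |ys - y0| ≤ w ∧ r ys = ys := by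
  have hsf : MapsTo r (Icc (y0 - w) (y0 + w)) (Icc (y0 - w) (y0 + w)) := by
    intro y hy
    have := abs_lt.1 (Q.h4 y (abs_le.2 ⟨by linarith [hy.1], by linarith [hy.2]⟩))
    exact ⟨by linarith, by linarith⟩
  have hc : ContractingWith (1/2) (hsf.restrict r _ _) := by
    refine ⟨by rw [← NNReal.coe_lt_coe]; norm_num, ?_⟩
    apply LipschitzWith.of_dist_le_mul
    rintro ⟨y, hy⟩ ⟨y', hy'⟩
    have := Q.h6 y y' (abs_le.2 ⟨by linarith [hy.1], by linarith [hy.2]⟩)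
      (abs_le.2 ⟨by linarith [hy'.1], by linarith [hy'.2]⟩)
    simpa [Subtype.dist_eq, Real.dist_eq] using this
  obtain ⟨y, hy, hf, -⟩ := hc.exists_fixedPoint' isClosed_Icc.isComplete hsf
    (x := y0) ⟨by linarith [Q.hw], by linarith [Q.hw]⟩ (edist_ne_top _ _)
  exact ⟨y, abs_le.2 ⟨by linarith [hy.1], by linarith [hy.2]⟩, hf⟩

lemma dsec (y y' : ℝ) : dist ((x0, y) : ℝ × ℝ) (x0, y') = |y - y'| := by
  simp [Prod.dist_eq, Real.dist_eq]

lemma Ret.track (H : Flow F K Φ) (Q : Ret F Φ O x0 y0 w Tmin Tmax Tf r) {ys : ℝ}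
    (hys : |ys - y0| ≤ w) (hr : r ys = ys) (n : ℕ) : ∀ y, |y - y0| ≤ w → ∀ t, 0 ≤ t → t ≤ n * Tmin →
    Metric.infDist (Φ (x0, y) t) (range (Φ (x0, ys))) ≤ Real.exp (K * Tmax) * |y - ys| := by
  have h0 : ∀ y, |y - y0| ≤ w → ∀ t, 0 ≤ t → t ≤ Tf y →
    Metric.infDist (Φ (x0, y) t) (range (Φ (x0, ys))) ≤ Real.exp (K * Tmax) * |y - ys| := by
    intro y hy t ht ht'
    refine (Metric.infDist_le_dist_of_mem (mem_range_self t)).trans ?_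
    refine (H.dist_le _ _ ht).trans ?_
    rw [dsec, mul_comm]
    gcongr
    exact ht'.trans (Q.h2 y hy)
  induction n with
  | zero =>
    intro y hy t ht ht'
    apply h0 y hy t ht
    have := Q.h1 y hy
    simp at ht'
    linarith [Q.hTmin]
  | succ n ih =>
    intro y hy t ht ht'
    rcases le_total t (Tf y) with h | h
    · exact h0 y hy t ht h
    · have e : Φ (x0, y) t = Φ (x0, r y) (t - Tf y) := by
        rw [← Q.h3 y hy, H.add]; simp
      rw [e]
      have h1 := Q.h1 y hy
      refine (ih (r y) (Q.h4 y hy).le _ (by linarith) (by push_cast at ht'; linarith)).trans ?_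
      have h6 := Q.h6 y ys hy hys
      rw [hr] at h6
      exact mul_le_mul_of_nonneg_left (by linarith [abs_nonneg (y - ys)]) (Real.exp_pos _).le

lemma Ret.track' (H : Flow F K Φ) (Q : Ret F Φ O x0 y0 w Tmin Tmax Tf r) {ys : ℝ}
    (hys : |ys - y0| ≤ w) (hr : r ys = ys) (n : ℕ) : ∀ y, |y - y0| ≤ w → ∃ t0, ∀ t, t0 ≤ t →
    Metric.infDist (Φ (x0, y) t) (range (Φ (x0, ys))) ≤ Real.exp (K * Tmax) * ((1 / 2) ^ n * |y - ys|) := by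
  induction n with
  | zero =>
    intro y hy
    refine ⟨0, fun t ht => ?_⟩
    obtain ⟨m, hm⟩ := exists_nat_ge (t / Tmin)
    have := Q.track H hys hr m y hy t ht (by rwa [div_le_iff₀ Q.hTmin] at hm)
    simpa using this
  | succ n ih =>
    intro y hy
    obtain ⟨t0, h⟩ := ih (r y) (Q.h4 y hy).le
    refine ⟨t0 + Tf y, fun t ht => ?_⟩
    have e : Φ (x0, y) t = Φ (x0, r y) (t - Tf y) := by
      rw [← Q.h3 y hy, H.add]; simp
    rw [e]
    refine (h _ (by linarith)).trans ?_
    have h6 := Q.h6 y ys hy hys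
    rw [hr] at h6
    rw [pow_succ, mul_assoc ((1 / 2 : ℝ) ^ n)]
    gcongr

lemma Ret.tends (H : Flow F K Φ) (Q : Ret F Φ O x0 y0 w Tmin Tmax Tf r) {ys : ℝ}
    (hys : |ys - y0| ≤ w) (hr : r ys = ys) {y : ℝ} (hy : |y - y0| ≤ w) :
    Tendsto (fun t => Metric.infDist (Φ (x0, y) t) (range (Φ (x0, ys)))) atTop (𝓝 0) := by
  rw [Metric.tendsto_atTop]
  intro e he
  have hl : Tendsto (fun n : ℕ => Real.exp (K * Tmax) * ((1 / 2 : ℝ) ^ n * |y - ys|)) atTop (𝓝 (Real.exp (K * Tmax) * (0 * |y - ys|))) :=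
    ((_root_.tendsto_pow_atTop_nhds_zero_of_lt_one (by norm_num) (by norm_num)).mul_const _).const_mul _
  rw [zero_mul, mul_zero] at hl
  obtain ⟨n, hn⟩ := (hl.eventually (gt_mem_nhds he)).exists
  obtain ⟨t0, h⟩ := Q.track' H hys hr n y hy
  refine ⟨t0, fun t ht => ?_⟩
  rw [Real.dist_eq, sub_zero, abs_of_nonneg Metric.infDist_nonneg]
  exact (h t ht).trans_lt hn

lemma Ret.main (H : Flow F K Φ) (Q : Ret F Φ O x0 y0 w Tmin Tmax Tf r) :
    ∃ ys, |ys - y0| ≤ w ∧ r ys = ys ∧ Function.Periodic (Φ (x0, ys)) (Tf ys) ∧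
      0 < (F (x0, ys)).1 ∧ (∀ t, Φ (x0, ys) t ∈ O) ∧
      ∃ U, IsOpen U ∧ range (Φ (x0, ys)) ⊆ U ∧ U ⊆ O ∧
        ∀ p ∈ U, Tendsto (fun t => Metric.infDist (Φ p t) (range (Φ (x0, ys)))) atTop (𝓝 0) := by
  obtain ⟨ys, hys, hr⟩ := Q.fix
  set T := Tf ys with hT
  have hT0 : 0 < T := Q.hTmin.trans_le (Q.h1 _ hys)
  have hp : Function.Periodic (Φ (x0, ys)) T := H.per (by rw [Q.h3 ys hys, hr])
  have hys' : |ys - y0| < w := by have := Q.h4 ys hys; rwa [hr] at this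
  have hpos : 0 < (F (x0, ys)).1 := by have := Q.h5 ys hys; rwa [hr] at this
  have hbig : ∀ t a : ℝ, ∃ n : ℕ, a ≤ t + n * T := by
    intro t a
    obtain ⟨m, hm⟩ := exists_nat_ge ((a - t) / T)
    rw [div_le_iff₀ hT0] at hm
    exact ⟨m, by linarith⟩
  have hO : ∀ t, Φ (x0, ys) t ∈ O := by
    intro t
    obtain ⟨m, hm⟩ := hbig t 0
    rw [← hp.nat_mul m t]
    exact Q.hinv _ (Q.hJ ys hys) _ hm
  set p0 : ℝ × ℝ := (x0, ys) with hp0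
  have hd1 : HasDerivAt (fun t => (Φ p0 t).1) (F p0).1 0 := by
    have := H.der p0 0
    rw [H.zero] at this
    exact this.fst
  set g := (w - |ys - y0|) / 2 with hg
  have hg0 : 0 < g := by rw [hg]; linarith
  have hnear : ∀ᶠ t in 𝓝 (0:ℝ), |(Φ p0 t).2 - ys| < g := by
    have hc : Continuous fun t => |(Φ p0 t).2 - ys| := ((H.cont p0).snd.sub continuous_const).abs
    have : |(Φ p0 0).2 - ys| < g := by rw [H.zero]; simpa [hp0] using hg0
    exact hc.continuousAt.eventually (gt_mem_nhds this)
  have hslope : ∀ᶠ t in 𝓝[≠] (0:ℝ), 0 < t⁻¹ * ((Φ p0 t).1 - x0) := by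
    have := hd1.tendsto_slope_zero
    have h := this.eventually (lt_mem_nhds hpos)
    filter_upwards [h] with t ht
    simpa [H.zero, hp0] using ht
  obtain ⟨τ, hτ, hτ'⟩ : ∃ τ > 0, ∀ t, |t| ≤ τ → |(Φ p0 t).2 - ys| < g ∧ (t ≠ 0 → 0 < t⁻¹ * ((Φ p0 t).1 - x0)) := by
    rw [eventually_nhdsWithin_iff] at hslope
    obtain ⟨d, hd, h⟩ := Metric.eventually_nhds_iff.1 (hnear.and hslope)
    refine ⟨d / 2, by positivity, fun t ht => ?_⟩
    have := h (y := t) (by rw [Real.dist_eq, sub_zero]; linarith)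
    exact ⟨this.1, fun h0 => this.2 h0⟩
  set q := Φ p0 (-τ) with hq
  have hq1 : q.1 < x0 := by
    have := (hτ' (-τ) (by rw [abs_neg, abs_of_pos hτ])).2 (by linarith)
    have h2 : (-τ)⁻¹ < 0 := inv_lt_zero.2 (by linarith)
    have := neg_of_mul_pos_right this h2.le
    linarith
  have hq2 : x0 < (Φ q (2 * τ)).1 := by
    rw [hq, H.add]
    have := (hτ' τ (by rw [abs_of_pos hτ])).2 hτ.ne'
    have h2 : 0 < τ⁻¹ := inv_pos.2 hτ
    have := pos_of_mul_pos_right this h2.le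
    rw [show 2 * τ + -τ = τ by ring]
    linarith
  set V : Set (ℝ × ℝ) := {p | p.1 < x0} ∩ {p | x0 < (Φ p (2 * τ)).1} ∩ {p | dist p q * Real.exp (K * (2 * τ)) < g} with hV
  have hτ2 : 0 ≤ 2 * τ := by linarith
  have hVo : IsOpen V := by
    refine ((isOpen_lt continuous_fst continuous_const).inter
      (isOpen_lt continuous_const (H.cont_init hτ2).fst)).inter (isOpen_lt ?_ continuous_const)
    fun_prop
  have hqV : q ∈ V := ⟨⟨hq1, hq2⟩, by simpa using hg0⟩
  have hhit : ∀ p ∈ V, ∃ s, 0 ≤ s ∧ ∃ y, |y - y0| ≤ w ∧ Φ p s = (x0, y) := by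
    rintro p ⟨⟨hp1, hp2⟩, hp3⟩
    have hiv := intermediate_value_Icc hτ2 (H.cont p).fst.continuousOn
    obtain ⟨s, hs, hs'⟩ := hiv (show x0 ∈ Icc _ _ by rw [H.zero]; exact ⟨le_of_lt hp1, le_of_lt hp2⟩)
    refine ⟨s, hs.1, (Φ p s).2, ?_, Prod.ext hs' rfl⟩
    have hA : |(Φ p s).2 - (Φ q s).2| < g := by
      have h1 := H.dist_le p q hs.1
      have h2 : dist (Φ p s).2 (Φ q s).2 ≤ dist (Φ p s) (Φ q s) := le_max_right _ _
      rw [Real.dist_eq] at h2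
      have h3 : dist p q * Real.exp (K * s) ≤ dist p q * Real.exp (K * (2 * τ)) := by
        gcongr; exact hs.2
      have h4 : dist p q * Real.exp (K * (2 * τ)) < g := hp3
      linarith
    have hB : |(Φ q s).2 - ys| < g := by
      rw [hq, H.add]
      exact (hτ' _ (abs_le.2 ⟨by linarith [hs.1], by linarith [hs.2]⟩)).1
    rw [abs_lt] at hA hB
    have := abs_le.1 (le_refl |ys - y0|)
    rw [abs_le]
    constructor <;> linarith
  refine ⟨ys, hys, hr, hp, hpos, hO, O ∩ ⋃ t ∈ Ici (0:ℝ), (fun p => Φ p t) ⁻¹' V, ?_, ?_, inter_subset_left, ?_⟩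
  · refine Q.hO.inter (isOpen_biUnion fun t ht => hVo.preimage (H.cont_init ht))
  · rintro _ ⟨t, rfl⟩
    refine ⟨hO t, ?_⟩
    obtain ⟨m, hm⟩ := hbig (-τ) t
    rw [mem_iUnion₂]
    refine ⟨-τ + m * T - t, by simp only [mem_Ici]; linarith, ?_⟩
    rw [mem_preimage, H.add, show -τ + m * T - t + t = -τ + m * T by ring, hp.nat_mul m]
    exact hqV
  · rintro p ⟨-, hpU⟩
    rw [mem_iUnion₂] at hpU
    obtain ⟨t, ht, hpt⟩ := hpU
    obtain ⟨s, hs, y, hy, hsy⟩ := hhit _ hpt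
    rw [H.add] at hsy
    have := Q.tends H hys hr hy
    have h2 := this.comp (tendsto_atTop_add_const_right atTop (-(s + t)) tendsto_id)
    refine h2.congr fun τ => ?_
    simp only [Function.comp, id]
    rw [← hsy, H.add]
    congr 2
    ring

end Flow
end SDO

namespace SDO

open Set NNReal

lemma hd_fst {f : ℝ → ℝ × ℝ} {f' : ℝ × ℝ} {t : ℝ} (h : HasDerivAt f f' t) :
    HasDerivAt (fun t => (f t).1) f'.1 t := h.fst

lemma hd_snd {f : ℝ → ℝ × ℝ} {f' : ℝ × ℝ} {t : ℝ} (h : HasDerivAt f f' t) :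
    HasDerivAt (fun t => (f t).2) f'.2 t := h.snd

lemma Rprops {R f : ℝ → ℝ} {b : ℝ} {k : ℕ} (hb : 0 < b) (hf : ContDiff ℝ 1 f)
    (hnn : ∀ u : ℝ, 0 ≤ u → 0 ≤ f u) (hf0 : 0 < f 0)
    (hR : ∀ z : ℝ, 0 < z → R z = b * ((z ^ k)⁻¹ * f z⁻¹)) (hRpos : ∀ z, 0 < R z) :
    ∃ c1 c2 L : ℝ, 0 < c1 ∧ 0 < c2 ∧ 0 ≤ L ∧ (∀ z, 1 ≤ z → c1 * (z⁻¹) ^ k ≤ R z) ∧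
      (∀ z, 1 ≤ z → R z ≤ c2 * (z⁻¹) ^ k) ∧
      (∀ z1 z2, 1 ≤ z1 → 1 ≤ z2 → |R z1 - R z2| ≤ L * |z1⁻¹ - z2⁻¹|) := by
  have hfpos : ∀ s ∈ Icc (0:ℝ) 1, 0 < f s := by
    intro s hs
    rcases hs.1.eq_or_lt with h | h
    · rw [← h]; exact hf0
    · have h1 := hRpos s⁻¹
      rw [hR _ (inv_pos.2 h), inv_inv] at h1
      rcases (hnn s hs.1).eq_or_lt with h2 | h2
      · rw [← h2] at h1; simp at h1
      · exact h2
  have hin : ∀ z : ℝ, 1 ≤ z → z⁻¹ ∈ Icc (0:ℝ) 1 := fun z hz =>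
    ⟨by positivity, inv_le_one_of_one_le₀ hz⟩
  have hR' : ∀ z : ℝ, 1 ≤ z → R z = b * f z⁻¹ * (z⁻¹) ^ k := by
    intro z hz
    rw [hR z (by linarith), inv_pow]; ring
  obtain ⟨m, hm, hmin⟩ := isCompact_Icc.exists_isMinOn (nonempty_Icc.2 (zero_le_one (α := ℝ)))
    hf.continuous.continuousOn
  obtain ⟨M, hM, hmax⟩ := isCompact_Icc.exists_isMaxOn (nonempty_Icc.2 (zero_le_one (α := ℝ)))
    hf.continuous.continuousOn
  have hh : ContDiff ℝ 1 (fun s => b * f s * s ^ k) := by fun_prop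
  obtain ⟨L, hL⟩ := hh.locallyLipschitz.locallyLipschitzOn.exists_lipschitzOnWith_of_compact
    (isCompact_Icc (a := (0:ℝ)) (b := 1))
  refine ⟨b * f m, b * f M, L, mul_pos hb (hfpos m hm), mul_pos hb (hfpos M hM), L.2, ?_, ?_, ?_⟩
  · intro z hz
    rw [hR' z hz]
    have := hmin (hin z hz)
    have h2 := (hin z hz).1
    gcongr
    exact this
  · intro z hz
    rw [hR' z hz]
    have := hmax (hin z hz)
    have h2 := (hin z hz).1
    gcongr
    exact this
  · intro z1 z2 h1 h2
    rw [hR' z1 h1, hR' z2 h2]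
    have := hL.dist_le_mul _ (hin z1 h1) _ (hin z2 h2)
    simpa [Real.dist_eq] using this

/-- Data of one half system. -/
structure IsHS (S : HS) (g0 σ ym yM v0 : ℝ) (k : ℕ) (R gu gv : ℝ → ℝ) : Prop where
  g0 : S.g0 = g0
  σ : S.σ = σ
  ym : S.ym = ym
  yM : S.yM = yM
  v0 : S.v0 = v0
  k : S.k = k
  R : S.R = R
  gu : S.gu = gu
  gv : S.gv = gv

lemma exists_right {φ φR : ℝ → ℝ} {k : ℕ} {α β : ℝ}
    (hφ : ContDiff ℝ (⊤ : ℕ∞) φ)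
    (hφ0 : ∀ z, 0 < φ z) (hφ1 : ∀ z, φ z < 1)
    (hφ' : ∀ z, 0 < deriv φ z)
    (hk : 1 ≤ k) (hφR : ContDiff ℝ (⊤ : ℕ∞) φR)
    (hφRnn : ∀ u : ℝ, 0 ≤ u → 0 ≤ φR u) (hφR0 : 0 < φR 0)
    (hAR : ∀ z : ℝ, 0 < z → φ z = 1 - (z ^ k)⁻¹ * φR z⁻¹)
    (hα : 0 < α) (hα1 : α < 1) (hαβ : 1 < α + β)
    {γR : ℝ → ℝ × ℝ}
    (hγR0 : γR 0 = (1, 1 / α))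
    (hγR : ∀ t, HasDerivAt γR
      ((α + β) * (γR t).2 - (γR t).1, 1 - (α + β) * (γR t).2) t)
    (hγRlim : Tendsto γR atTop (nhds (1, 1 / (α + β)))) :
    ∃ S : HS, IsHS S (α + β) 1 (1 / (2 * (α + β))) (2 / α) (1 / α - 1 / (α + β)) k
      (fun z => β * (1 - φ z)) (fun t => (γR t).1 - 1) (fun t => (γR t).2 - 1 / (α + β)) := by
  have hβ : 0 < β := by linarith
  have ha : 0 < α + β := by linarith
  obtain ⟨c1, c2, L, hc1, hc2, hL, h1, h2, h3⟩ := Rprops (k := k) (R := fun z => β * (1 - φ z)) hβ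
    (hφR.of_le (by norm_cast)) hφRnn hφR0 (fun z hz => by simp only [hAR z hz]; ring)
    (fun z => mul_pos hβ (by linarith [hφ1 z]))
  have hd : ∀ z, HasDerivAt φ (deriv φ z) z := fun z =>
    (hφ.differentiable (by simp)).differentiableAt.hasDerivAt
  refine ⟨{
    g0 := α + β, σ := 1, gm := α, gM := α + β, ym := 1 / (2 * (α + β)), yM := 2 / α, c1 := c1,
    c2 := c2, L := L, v0 := 1 / α - 1 / (α + β), k := k, R := fun z => β * (1 - φ z),
    R' := fun z => β * (0 - deriv φ z), gu := fun t => (γR t).1 - 1, gv := fun t => (γR t).2 - 1 / (α + β),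
    hk := hk, hg0 := ha, hσ := Or.inl rfl, hgm := hα, hym := by positivity, hyM := ?_, hc1 := hc1,
    hc2 := hc2, hL := hL, hv0 := ?_, hR := ?_, hR' := ?_, hRpos := ?_, hg1 := ?_, hg2 := ?_,
    hRlo := h1, hRhi := h2, hRL := h3, hgu := ?_, hgv := ?_, hgu0 := by simp [hγR0], hgv0 := by simp [hγR0],
    hlimu := ?_, hlimv := ?_ }, ⟨rfl, rfl, rfl, rfl, rfl, rfl, rfl, rfl, rfl⟩⟩
  · rw [div_le_div_iff₀ (by positivity) hα]; nlinarith
  · rw [sub_pos]; exact one_div_lt_one_div_of_lt hα (by linarith)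
  · intro z; exact ((hasDerivAt_const z (1:ℝ)).sub (hd z)).const_mul β
  · intro z; nlinarith [hφ' z]
  · intro z; exact mul_pos hβ (by linarith [hφ1 z])
  · intro z; nlinarith [hφ0 z]
  · intro z; nlinarith [hφ1 z]
  · intro t
    have := (hd_fst (hγR t)).sub_const 1
    refine this.congr_deriv ?_
    have := hα.ne'
    have := ha.ne'
    field_simp
    ring
  · intro t
    have := (hd_snd (hγR t)).sub_const (1 / (α + β))
    refine this.congr_deriv ?_
    have := hα.ne'
    have := ha.ne'
    field_simp
    ring
  · have := (hγRlim.fst_nhds).sub_const 1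
    simpa using this
  · have := (hγRlim.snd_nhds).sub_const (1 / (α + β))
    simpa using this

lemma exists_left {φ φL : ℝ → ℝ} {k : ℕ} {α β : ℝ}
    (hφ : ContDiff ℝ (⊤ : ℕ∞) φ)
    (hφ0 : ∀ z, 0 < φ z) (hφ1 : ∀ z, φ z < 1)
    (hφ' : ∀ z, 0 < deriv φ z)
    (hk : 1 ≤ k) (hφL : ContDiff ℝ (⊤ : ℕ∞) φL)
    (hφLnn : ∀ u : ℝ, 0 ≤ u → 0 ≤ φL u) (hφL0 : 0 < φL 0)
    (hAL : ∀ z : ℝ, z < 0 → φ z = ((-z) ^ k)⁻¹ * φL (-z)⁻¹)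
    (hα : 0 < α) (hα1 : α < 1) (hαβ : 1 < α + β)
    {γL : ℝ → ℝ × ℝ}
    (hγL0 : γL 0 = (1, 1 / (α + β)))
    (hγL : ∀ t, HasDerivAt γL
      (α * (γL t).2 - (γL t).1, 1 - α * (γL t).2) t)
    (hγLlim : Tendsto γL atTop (nhds (1, 1 / α))) :
    ∃ S : HS, IsHS S α (-1) (1 / (2 * (α + β))) (2 / α) (1 / α - 1 / (α + β)) k
      (fun z => β * φ (-z)) (fun t => 1 - (γL t).1) (fun t => 1 / α - (γL t).2) := by
  have hβ : 0 < β := by linarith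
  have ha : 0 < α + β := by linarith
  obtain ⟨c1, c2, L, hc1, hc2, hL, h1, h2, h3⟩ := Rprops (k := k) (R := fun z => β * φ (-z)) hβ
    (hφL.of_le (by norm_cast)) hφLnn hφL0
    (fun z hz => by simp only [hAL (-z) (by linarith), neg_neg])
    (fun z => mul_pos hβ (hφ0 _))
  have hd : ∀ z, HasDerivAt φ (deriv φ z) z := fun z =>
    (hφ.differentiable (by simp)).differentiableAt.hasDerivAt
  refine ⟨{
    g0 := α, σ := -1, gm := α, gM := α + β, ym := 1 / (2 * (α + β)), yM := 2 / α, c1 := c1,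
    c2 := c2, L := L, v0 := 1 / α - 1 / (α + β), k := k, R := fun z => β * φ (-z),
    R' := fun z => β * (deriv φ (-z) * -1), gu := fun t => 1 - (γL t).1, gv := fun t => 1 / α - (γL t).2,
    hk := hk, hg0 := hα, hσ := Or.inr rfl, hgm := hα, hym := by positivity, hyM := ?_, hc1 := hc1,
    hc2 := hc2, hL := hL, hv0 := ?_, hR := ?_, hR' := ?_, hRpos := ?_, hg1 := ?_, hg2 := ?_,
    hRlo := h1, hRhi := h2, hRL := h3, hgu := ?_, hgv := ?_, hgu0 := by simp [hγL0], hgv0 := by simp [hγL0],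
    hlimu := ?_, hlimv := ?_ }, ⟨rfl, rfl, rfl, rfl, rfl, rfl, rfl, rfl, rfl⟩⟩
  · rw [div_le_div_iff₀ (by positivity) hα]; nlinarith
  · rw [sub_pos]; exact one_div_lt_one_div_of_lt hα (by linarith)
  · intro z; exact (HasDerivAt.comp z (hd (-z)) (hasDerivAt_neg z)).const_mul β
  · intro z; nlinarith [hφ' (-z)]
  · intro z; exact mul_pos hβ (hφ0 _)
  · intro z; nlinarith [hφ0 (-z)]
  · intro z; nlinarith [hφ1 (-z)]
  · intro t
    have := (hd_fst (hγL t)).const_sub 1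
    refine this.congr_deriv ?_
    have := hα.ne'
    have := ha.ne'
    field_simp
    ring
  · intro t
    have := (hd_snd (hγL t)).const_sub (1 / α)
    refine this.congr_deriv ?_
    have := hα.ne'
    have := ha.ne'
    field_simp
  · have := (hγLlim.fst_nhds).const_sub 1
    simpa using this
  · have := (hγLlim.snd_nhds).const_sub (1 / α)
    simpa using this

end SDO

namespace SDO

open Set NNReal

lemma exists_sdflow {φ : ℝ → ℝ} {α β μ η ε : ℝ}
    (hφ : ContDiff ℝ (⊤ : ℕ∞) φ)
    (hφ0 : ∀ z, 0 < φ z) (hφ1 : ∀ z, φ z < 1)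
    (hα : 0 < α) (hβ : 0 < β) (hη1 : η < 2) (hμ : 0 ≤ μ)
    (hη2 : μ / (2 * (α + β)) + 1 / 2 < η) :
    ∃ (F : ℝ × ℝ → ℝ × ℝ) (K B : ℝ≥0) (Φ : ℝ × ℝ → ℝ → ℝ × ℝ), Flow F K Φ ∧ (∀ p, ‖F p‖ ≤ B) ∧
      (∀ p ∈ Ioo 0 (2 * (α + β) / α + 1) ×ˢ Ioo (1 / (2 * (α + β))) (2 / α),
        F p = sdVF φ α β μ η ε p) ∧
      (∀ p ∈ Ioo 0 (2 * (α + β) / α + 1) ×ˢ Ioo (1 / (2 * (α + β))) (2 / α), ∀ t, 0 ≤ t →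
        Φ p t ∈ Ioo 0 (2 * (α + β) / α + 1) ×ˢ Ioo (1 / (2 * (α + β))) (2 / α)) := by
  have ha : 0 < α + β := by linarith
  set X := 2 * (α + β) / α + 1 with hX
  set ym := 1 / (2 * (α + β)) with hym
  set yM := 2 / α with hyM
  have hX0 : 0 < X := by positivity
  have hym0 : 0 < ym := by positivity
  have hy : ym < yM := by
    rw [hym, hyM, div_lt_div_iff₀ (by positivity) hα]; nlinarith
  have hG : ContDiff ℝ 1 (sdVF φ α β μ η ε) := by
    have h1 : ContDiff ℝ 1 φ := hφ.of_le (by norm_cast)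
    unfold sdVF
    fun_prop
  set C : ℝ × ℝ → ℝ × ℝ := fun p => ((projIcc 0 X hX0.le p.1 : ℝ), (projIcc ym yM hy.le p.2 : ℝ)) with hC
  have hCm : ∀ p, C p ∈ Icc 0 X ×ˢ Icc ym yM := fun p => ⟨Subtype.prop _, Subtype.prop _⟩
  have hCL : LipschitzWith 1 C := by
    apply LipschitzWith.of_dist_le_mul
    intro p q
    have h1 := (LipschitzWith.projIcc hX0.le).dist_le_mul p.1 q.1
    have h2 := (LipschitzWith.projIcc hy.le).dist_le_mul p.2 q.2
    simp only [NNReal.coe_one, one_mul] at h1 h2 ⊢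
    exact max_le (h1.trans (le_max_left _ _)) (h2.trans (le_max_right _ _))
  have hcomp : IsCompact (Icc 0 X ×ˢ Icc ym yM) := isCompact_Icc.prod isCompact_Icc
  obtain ⟨K, hK⟩ := hG.locallyLipschitz.locallyLipschitzOn.exists_lipschitzOnWith_of_compact hcomp
  obtain ⟨B, hB⟩ := hcomp.exists_bound_of_continuousOn hG.continuous.continuousOn
  have hFL : LipschitzWith K (fun p => sdVF φ α β μ η ε (C p)) := by
    have := hK.comp hCL.lipschitzOnWith (s := univ) (fun p _ => hCm p)
    rw [mul_one, lipschitzOnWith_univ] at this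
    exact this
  have hFB : ∀ p, ‖sdVF φ α β μ η ε (C p)‖ ≤ B.toNNReal := fun p =>
    (hB _ (hCm p)).trans (Real.le_coe_toNNReal B)
  obtain ⟨Φ, H⟩ := exists_flow hFL hFB
  refine ⟨_, K, _, Φ, H, hFB, ?_, ?_⟩
  · rintro p ⟨h1, h2⟩
    have : C p = p := by
      simp only [hC]
      rw [projIcc_of_mem _ (Ioo_subset_Icc_self h1), projIcc_of_mem _ (Ioo_subset_Icc_self h2)]
    simp only [this]
  · rintro p ⟨h1, h2⟩ t ht
    have hx : ∀ s, HasDerivAt (fun s => (Φ p s).1) (sdVF φ α β μ η ε (C (Φ p s))).1 s :=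
      fun s => hd_fst (H.der p s)
    have hyd : ∀ s, HasDerivAt (fun s => (Φ p s).2) (sdVF φ α β μ η ε (C (Φ p s))).2 s :=
      fun s => hd_snd (H.der p s)
    have hg : ∀ z, α < α + β * φ z ∧ α + β * φ z < α + β := fun z =>
      ⟨by nlinarith [hφ0 z], by nlinarith [hφ1 z]⟩
    have b1 := barrier (f := fun s => (Φ p s).1) (a := 0) (b := t) (fun s _ => hx s)
      (by simpa [H.zero] using h1.1) (by
        intro s _ h0 _
        have hc1 : (C (Φ p s)).1 = 0 := by
          simp only [hC]; rw [projIcc_of_le_left _ h0.le]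
        have hc2 := (hCm (Φ p s)).2.1
        have := hg (((C (Φ p s)).1 - 1) / ε)
        simp only [sdVF]
        rw [hc1] at this ⊢
        nlinarith) t ⟨ht, le_rfl⟩
    have b2 := barrier (f := fun s => X - (Φ p s).1) (a := 0) (b := t) (fun s _ => (hx s).const_sub X)
      (by simpa [H.zero] using h1.2) (by
        intro s _ h0 _
        have hc1 : (C (Φ p s)).1 = X := by
          simp only [hC]; rw [projIcc_of_right_le _ (by linarith)]
        have hc2 := (hCm (Φ p s)).2.2
        have hc3 := (hCm (Φ p s)).2.1
        have := hg (((C (Φ p s)).1 - 1) / ε)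
        simp only [sdVF]
        rw [hc1] at this ⊢
        have h4 : (α + β * φ ((X - 1) / ε)) * (C (Φ p s)).2 ≤ (α + β) * yM := by
          apply mul_le_mul this.2.le hc2 (hym0.le.trans hc3) ha.le
        have h5 : (α + β) * yM = X - 1 := by rw [hX, hyM]; ring
        linarith) t ⟨ht, le_rfl⟩
    have b3 := barrier (f := fun s => (Φ p s).2 - ym) (a := 0) (b := t) (fun s _ => (hyd s).sub_const ym)
      (by simpa [H.zero] using h2.1) (by
        intro s _ h0 _
        have hc1 : (C (Φ p s)).2 = ym := by
          simp only [hC]; rw [projIcc_of_le_left _ (by linarith)]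
        have := hg (((C (Φ p s)).1 - 1) / ε)
        simp only [sdVF]
        rw [hc1]
        have h5 : (α + β) * ym = 1 / 2 := by rw [hym]; field_simp
        have h6 : μ * ym = μ / (2 * (α + β)) := by rw [hym]; field_simp
        nlinarith) t ⟨ht, le_rfl⟩
    have b4 := barrier (f := fun s => yM - (Φ p s).2) (a := 0) (b := t) (fun s _ => (hyd s).const_sub yM)
      (by simpa [H.zero] using h2.2) (by
        intro s _ h0 _
        have hc1 : (C (Φ p s)).2 = yM := by
          simp only [hC]; rw [projIcc_of_right_le _ (by linarith)]
        have := hg (((C (Φ p s)).1 - 1) / ε)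
        simp only [sdVF]
        rw [hc1]
        have h5 : α * yM = 2 := by rw [hyM]; field_simp
        have h6 : 0 < yM := hym0.trans hy
        have h7 : 0 ≤ μ * yM := by positivity
        nlinarith) t ⟨ht, le_rfl⟩
    exact ⟨⟨b1, by linarith⟩, ⟨by linarith, by linarith⟩⟩

end SDO

namespace SDO

open Set NNReal

def Obox (α β : ℝ) : Set (ℝ × ℝ) :=
  Ioo 0 (2 * (α + β) / α + 1) ×ˢ Ioo (1 / (2 * (α + β))) (2 / α)

structure Sys (φ : ℝ → ℝ) (α β μ η ε : ℝ) (F : ℝ × ℝ → ℝ × ℝ) (K B : ℝ≥0) (Φ : ℝ × ℝ → ℝ → ℝ × ℝ) : Prop where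
  fl : Flow F K Φ
  bd : ∀ p, ‖F p‖ ≤ B
  eq : ∀ p ∈ Obox α β, F p = sdVF φ α β μ η ε p
  inv : ∀ p ∈ Obox α β, ∀ t, 0 ≤ t → Φ p t ∈ Obox α β
  hα : 0 < α
  hα1 : α < 1
  hαβ : 1 < α + β

variable {φ : ℝ → ℝ} {α β μ η ε : ℝ} {F : ℝ × ℝ → ℝ × ℝ} {K B : ℝ≥0} {Φ : ℝ × ℝ → ℝ → ℝ × ℝ}
  {SR SL : HS} {k : ℕ} {guR gvR guL gvL : ℝ → ℝ} {v0 : ℝ} {γR γL : ℝ → ℝ × ℝ}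

lemma Sys.der (Y : Sys φ α β μ η ε F K B Φ) {p : ℝ × ℝ} (hp : p ∈ Obox α β) {t : ℝ} (ht : 0 ≤ t) :
    HasDerivAt (Φ p) (sdVF φ α β μ η ε (Φ p t)) t := by
  rw [← Y.eq _ (Y.inv p hp t ht)]
  exact Y.fl.der p t

lemma Sys.solR (Y : Sys φ α β μ η ε F K B Φ)
    (I : IsHS SR (α + β) 1 (1 / (2 * (α + β))) (2 / α) v0 k (fun z => β * (1 - φ z)) guR gvR)
    {p : ℝ × ℝ} (hp : p ∈ Obox α β) :
    SR.Sol ε (η - 1 - μ / (α + β)) μ (fun t => (Φ p t).1 - 1) (fun t => (Φ p t).2 - 1 / (α + β)) := by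
  have ha : α + β ≠ 0 := by linarith [Y.hαβ]
  have hy : ∀ v, SR.y v = 1 / (α + β) + v := by
    intro v; rw [HS.y, I.g0, I.σ]; ring
  constructor
  · intro t ht
    refine ((hd_fst (Y.der hp ht)).sub_const 1).congr_deriv ?_
    rw [HS.N, hy, I.R, I.g0, sdVF]
    field_simp
    ring
  · intro t ht
    refine ((hd_snd (Y.der hp ht)).sub_const (1 / (α + β))).congr_deriv ?_
    rw [HS.N, hy, I.R, I.g0, sdVF]
    field_simp
    ring
  · intro t ht
    rw [hy, I.ym]
    have := (Y.inv p hp t ht).2.1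
    linarith
  · intro t ht
    rw [hy, I.yM]
    have := (Y.inv p hp t ht).2.2
    linarith

lemma Sys.solL (Y : Sys φ α β μ η ε F K B Φ)
    (I : IsHS SL α (-1) (1 / (2 * (α + β))) (2 / α) v0 k (fun z => β * φ (-z)) guL gvL)
    {p : ℝ × ℝ} (hp : p ∈ Obox α β) :
    SL.Sol ε (-(η - 1 - μ / α)) μ (fun t => 1 - (Φ p t).1) (fun t => 1 / α - (Φ p t).2) := by
  have ha : α ≠ 0 := Y.hα.ne'
  have hy : ∀ v, SL.y v = 1 / α - v := by
    intro v; rw [HS.y, I.g0, I.σ]; ring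
  have hz : ∀ x : ℝ, -((1 - x) / ε) = (x - 1) / ε := fun x => by ring
  constructor
  · intro t ht
    refine ((hd_fst (Y.der hp ht)).const_sub 1).congr_deriv ?_
    rw [HS.N, hy, I.R, I.g0, sdVF]
    simp only [hz]
    generalize φ (((Φ p t).1 - 1) / ε) = w
    field_simp
    ring
  · intro t ht
    refine ((hd_snd (Y.der hp ht)).const_sub (1 / α)).congr_deriv ?_
    rw [HS.N, hy, I.R, I.g0, sdVF]
    simp only [hz]
    generalize φ (((Φ p t).1 - 1) / ε) = w
    field_simp
    ring
  · intro t ht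
    rw [hy, I.ym]
    have := (Y.inv p hp t ht).2.1
    linarith
  · intro t ht
    rw [hy, I.yM]
    have := (Y.inv p hp t ht).2.2
    linarith

structure Trip (α β : ℝ) (F : ℝ × ℝ → ℝ × ℝ) (Φ : ℝ × ℝ → ℝ → ℝ × ℝ) (γR γL : ℝ → ℝ × ℝ)
    (c u0 TmR TmL y T1 T2 y1 y2 : ℝ) : Prop where
  p1 : 0 < T1
  p2 : 0 < T2
  b1 : T1 ≤ TmR
  b2 : T2 ≤ TmL
  e1 : Φ (1 + u0, y) T1 = (1 - u0, y1)
  w1 : |y1 - 1 / (α + β)| < 3 * u0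
  f1 : ∀ t ∈ Ico 0 T1, 1 - u0 < (Φ (1 + u0, y) t).1
  e2 : Φ (1 - u0, y1) T2 = (1 + u0, y2)
  w2 : |y2 - 1 / α| < 3 * u0
  f2 : ∀ t ∈ Ico 0 T2, (Φ (1 - u0, y1) t).1 < 1 + u0
  pos : 0 < (F (1 + u0, y2)).1
  cR : ∀ t ∈ Icc 0 T1, ∃ s, 0 ≤ s ∧ dist (Φ (1 + u0, y) t) (γR s) ≤ c
  cR' : ∀ s, 0 ≤ s → ∃ t ∈ Icc 0 T1, dist (γR s) (Φ (1 + u0, y) t) ≤ c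
  cL : ∀ t ∈ Icc 0 T2, ∃ s, 0 ≤ s ∧ dist (Φ (1 - u0, y1) t) (γL s) ≤ c
  cL' : ∀ s, 0 ≤ s → ∃ t ∈ Icc 0 T2, dist (γL s) (Φ (1 - u0, y1) t) ≤ c

lemma memR (hα : 0 < α) (hα1 : α < 1) (hαβ : 1 < α + β) {u0 y : ℝ} (h0 : 0 < u0) (h1 : u0 < 1)
    (h3 : 3 * u0 < 1 / (2 * (α + β))) (hy : |y - 1 / α| ≤ 3 * u0) : (1 + u0, y) ∈ Obox α β := by
  have ha : 0 < α + β := by linarith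
  have e1 : 1 / (2 * (α + β)) = (1 / (α + β)) / 2 := by field_simp
  have e2 : 2 / α = 2 * (1 / α) := by field_simp
  have l : 1 / (α + β) < 1 / α := one_div_lt_one_div_of_lt hα (by linarith)
  have l2 : 1 ≤ (α + β) / α := by rw [le_div_iff₀ hα]; linarith
  have l3 : 0 < 1 / (α + β) := by positivity
  have e3 : 2 * (α + β) / α = 2 * ((α + β) / α) := by ring
  rw [abs_le] at hy
  rw [e1] at h3
  refine ⟨⟨?_, ?_⟩, ?_, ?_⟩ <;> simp only [e1, e2, e3] <;> linarith

lemma memL (hα : 0 < α) (hα1 : α < 1) (hαβ : 1 < α + β) {u0 y : ℝ} (h0 : 0 < u0) (h1 : u0 < 1)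
    (h3 : 3 * u0 < 1 / (2 * (α + β))) (hy : |y - 1 / (α + β)| ≤ 3 * u0) : (1 - u0, y) ∈ Obox α β := by
  have ha : 0 < α + β := by linarith
  have e1 : 1 / (2 * (α + β)) = (1 / (α + β)) / 2 := by field_simp
  have e2 : 2 / α = 2 * (1 / α) := by field_simp
  have l : 1 / (α + β) < 1 / α := one_div_lt_one_div_of_lt hα (by linarith)
  have l2 : 1 ≤ (α + β) / α := by rw [le_div_iff₀ hα]; linarith
  have l3 : 0 < 1 / (α + β) := by positivity
  have e3 : 2 * (α + β) / α = 2 * ((α + β) / α) := by ring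
  rw [abs_le] at hy
  rw [e1] at h3
  refine ⟨⟨?_, ?_⟩, ?_, ?_⟩ <;> simp only [e1, e2, e3] <;> linarith

lemma distp {a b c d e : ℝ} (h1 : |a - c| ≤ e) (h2 : |b - d| ≤ e) :
    dist ((a, b) : ℝ × ℝ) (c, d) ≤ e := by
  rw [Prod.dist_eq, Real.dist_eq, Real.dist_eq]
  exact max_le h1 h2

lemma Sys.trip (Y : Sys φ α β μ η ε F K B Φ)
    (IR : IsHS SR (α + β) 1 (1 / (2 * (α + β))) (2 / α) (1 / α - 1 / (α + β)) k
      (fun z => β * (1 - φ z)) (fun t => (γR t).1 - 1) (fun t => (γR t).2 - 1 / (α + β)))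
    (IL : IsHS SL α (-1) (1 / (2 * (α + β))) (2 / α) (1 / α - 1 / (α + β)) k
      (fun z => β * φ (-z)) (fun t => 1 - (γL t).1) (fun t => 1 / α - (γL t).2))
    {c u0 TmR TmL : ℝ}
    (HR : SR.Half c u0 TmR ε (η - 1 - μ / (α + β)) μ) (HL : SL.Half c u0 TmL ε (-(η - 1 - μ / α)) μ)
    (h0 : 0 < u0) (h1 : u0 < 1) (h3 : 3 * u0 < 1 / (2 * (α + β))) (y : ℝ) (hy : |y - 1 / α| ≤ 3 * u0) :
    ∃ T1 T2 y1 y2, Trip α β F Φ γR γL c u0 TmR TmL y T1 T2 y1 y2 := by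
  have hp := memR Y.hα Y.hα1 Y.hαβ h0 h1 h3 hy
  set p : ℝ × ℝ := (1 + u0, y) with hpd
  obtain ⟨T1, hT1, hT1m, hx1, hf1, hv1, -, hc1, hc1'⟩ := HR.pass _ _ (Y.solR IR hp)
    (by simp [Y.fl.zero, hpd]) (by
      simp only [Y.fl.zero, hpd, IR.v0]
      rwa [show y - 1 / (α + β) - (1 / α - 1 / (α + β)) = y - 1 / α by ring])
  set y1 := (Φ p T1).2 with hy1
  have e1 : Φ p T1 = (1 - u0, y1) := Prod.ext (by simp only at hx1 ⊢; linarith) rfl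
  have hq := memL Y.hα Y.hα1 Y.hαβ h0 h1 h3 hv1.le
  set q : ℝ × ℝ := (1 - u0, y1) with hqd
  obtain ⟨T2, hT2, hT2m, hx2, hf2, hv2, hN2, hc2, hc2'⟩ := HL.pass _ _ (Y.solL IL hq)
    (by simp [Y.fl.zero, hqd]) (by
      simp only [Y.fl.zero, hqd, IL.v0]
      rw [show 1 / α - y1 - (1 / α - 1 / (α + β)) = -(y1 - 1 / (α + β)) by ring, abs_neg]
      exact hv1.le)
  set y2 := (Φ q T2).2 with hy2
  have e2 : Φ q T2 = (1 + u0, y2) := Prod.ext (by simp only at hx2 ⊢; linarith) rfl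
  refine ⟨T1, T2, y1, y2, hT1, hT2, hT1m, hT2m, e1, hv1, ?_, e2, ?_, ?_, ?_, ?_, ?_, ?_, ?_⟩
  · intro t ht; have := hf1 t ht; linarith
  · rw [abs_sub_comm]; exact hv2
  · intro t ht; have := hf2 t ht; linarith
  · rw [← e2, Y.eq _ (Y.inv q hq T2 hT2.le)]
    have h := ((Y.solL IL hq).hu T2 hT2.le).unique ((hd_fst (Y.der hq hT2.le)).const_sub 1)
    linarith
  · intro t ht
    obtain ⟨s, hs, ha, hb⟩ := hc1 t ht
    rw [IR.gu] at ha; rw [IR.gv] at hb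
    refine ⟨s, hs, distp ?_ ?_⟩
    · convert ha using 2; ring
    · convert hb using 2; ring
  · intro s hs
    obtain ⟨t, ht, ha, hb⟩ := hc1' s hs
    rw [IR.gu] at ha; rw [IR.gv] at hb
    refine ⟨t, ht, ?_⟩
    rw [dist_comm]
    refine distp ?_ ?_
    · convert ha using 2; ring
    · convert hb using 2; ring
  · intro t ht
    obtain ⟨s, hs, ha, hb⟩ := hc2 t ht
    rw [IL.gu] at ha; rw [IL.gv] at hb
    refine ⟨s, hs, ?_⟩
    rw [dist_comm]
    refine distp ?_ ?_
    · convert ha using 2; ring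
    · convert hb using 2; ring
  · intro s hs
    obtain ⟨t, ht, ha, hb⟩ := hc2' s hs
    rw [IL.gu] at ha; rw [IL.gv] at hb
    refine ⟨t, ht, distp ?_ ?_⟩
    · convert ha using 2; ring
    · convert hb using 2; ring

end SDO

namespace SDO

open Set NNReal

variable {φ : ℝ → ℝ} {α β μ η ε : ℝ} {F : ℝ × ℝ → ℝ × ℝ} {K B : ℝ≥0} {Φ : ℝ × ℝ → ℝ → ℝ × ℝ}
  {SR SL : HS} {k : ℕ} {γR γL : ℝ → ℝ × ℝ}

lemma Sys.assemble (Y : Sys φ α β μ η ε F K B Φ)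
    (IR : IsHS SR (α + β) 1 (1 / (2 * (α + β))) (2 / α) (1 / α - 1 / (α + β)) k
      (fun z => β * (1 - φ z)) (fun t => (γR t).1 - 1) (fun t => (γR t).2 - 1 / (α + β)))
    (IL : IsHS SL α (-1) (1 / (2 * (α + β))) (2 / α) (1 / α - 1 / (α + β)) k
      (fun z => β * φ (-z)) (fun t => 1 - (γL t).1) (fun t => 1 / α - (γL t).2))
    (hγR0 : γR 0 = (1, 1 / α)) (hγL0 : γL 0 = (1, 1 / (α + β)))
    {c u0 TmR TmL : ℝ} (hc : 0 < c)
    (HR : SR.Half c u0 TmR ε (η - 1 - μ / (α + β)) μ) (HL : SL.Half c u0 TmL ε (-(η - 1 - μ / α)) μ)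
    (h0 : 0 < u0) (h1 : u0 < 1) (h3 : 3 * u0 < 1 / (2 * (α + β))) :
    ∃ sol : ℝ → ℝ × ℝ,
      (∀ t, HasDerivAt sol (sdVF φ α β μ η ε (sol t)) t) ∧
      (∃ T > 0, ∀ t, sol (t + T) = sol t) ∧
      (∃ t s : ℝ, sol t ≠ sol s) ∧
      (∃ U : Set (ℝ × ℝ), IsOpen U ∧ Set.range sol ⊆ U ∧
        ∀ p ∈ U, ∃ ψ : ℝ → ℝ × ℝ, ψ 0 = p ∧
          (∀ t : ℝ, 0 ≤ t → HasDerivAt ψ (sdVF φ α β μ η ε (ψ t)) t) ∧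
          Tendsto (fun t => Metric.infDist (ψ t) (Set.range sol)) atTop (nhds 0)) ∧
      Metric.hausdorffDist (Set.range sol)
        (γR '' Set.Ici 0 ∪ γL '' Set.Ici 0 ∪ {(1, 1 / α), (1, 1 / (α + β))}) ≤ c := by
  have htrip := Y.trip IR IL HR HL h0 h1 h3
  choose! T1 T2 y1 y2 W using htrip
  have hmem : ∀ y, |y - 1 / α| ≤ 3 * u0 → ((1 + u0, y) : ℝ × ℝ) ∈ Obox α β := fun y hy =>
    memR Y.hα Y.hα1 Y.hαβ h0 h1 h3 hy
  have hmem' : ∀ y, |y - 1 / α| ≤ 3 * u0 → ((1 - u0, y1 y) : ℝ × ℝ) ∈ Obox α β := fun y hy =>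
    memL Y.hα Y.hα1 Y.hαβ h0 h1 h3 (W y hy).w1.le
  have hT1 : ∀ y, |y - 1 / α| ≤ 3 * u0 → 2 * u0 / (B + 1) ≤ T1 y := by
    intro y hy
    have h := norm_image_sub_le_of_norm_deriv_le_segment' (f := Φ (1 + u0, y)) (a := 0) (b := T1 y)
      (C := B) (fun t _ => (Y.fl.der _ t).hasDerivWithinAt) (fun t _ => Y.bd _) (T1 y)
      ⟨(W y hy).p1.le, le_rfl⟩
    rw [(W y hy).e1, Y.fl.zero] at h
    have h2 : ‖((1 - u0, y1 y) - (1 + u0, y) : ℝ × ℝ).1‖ ≤ ‖((1 - u0, y1 y) - (1 + u0, y) : ℝ × ℝ)‖ :=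
      norm_fst_le _
    have h4 : ‖((1 - u0, y1 y) - (1 + u0, y) : ℝ × ℝ).1‖ = 2 * u0 := by
      rw [Prod.fst_sub, Real.norm_eq_abs, show (1 - u0 - (1 + u0)) = -(2 * u0) by ring, abs_neg,
        abs_of_pos (by linarith)]
    rw [div_le_iff₀ (by positivity)]
    have := (W y hy).p1
    nlinarith
  have e3 : ∀ y, |y - 1 / α| ≤ 3 * u0 → Φ (1 + u0, y) (T1 y + T2 y) = (1 + u0, y2 y) := by
    intro y hy
    rw [add_comm (T1 y) (T2 y), ← Y.fl.add, (W y hy).e1, (W y hy).e2]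
  have Q : Flow.Ret F Φ (Obox α β) (1 + u0) (1 / α) (3 * u0) (2 * u0 / (B + 1)) (TmR + TmL)
      (fun y => T1 y + T2 y) y2 := by
    refine ⟨isOpen_Ioo.prod isOpen_Ioo, Y.inv, hmem, by linarith, by positivity, ?_, ?_, e3,
      fun y hy => (W y hy).w2, fun y hy => (W y hy).pos, ?_⟩
    · intro y hy; have := hT1 y hy; have := (W y hy).p2; linarith
    · intro y hy; have := (W y hy).b1; have := (W y hy).b2; linarith
    · intro y y' hy hy'
      have W1 := W y hy
      have W2 := W y' hy'
      have A := HR.contr _ _ _ _ (T1 y) (T1 y') (Y.solR IR (hmem y hy)) (Y.solR IR (hmem y' hy'))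
        (by simp [Y.fl.zero])
        (by simp only [Y.fl.zero, IR.v0]; rwa [show y - 1 / (α + β) - (1 / α - 1 / (α + β)) = y - 1 / α by ring])
        (by simp [Y.fl.zero])
        (by simp only [Y.fl.zero, IR.v0]; rwa [show y' - 1 / (α + β) - (1 / α - 1 / (α + β)) = y' - 1 / α by ring])
        W1.p1.le (by rw [W1.e1]; ring) (fun t ht => by have := W1.f1 t ht; linarith)
        W2.p1.le (by rw [W2.e1]; ring) (fun t ht => by have := W2.f1 t ht; linarith)
      simp only [Y.fl.zero, W1.e1, W2.e1] at A
      rw [sub_sub_sub_cancel_right, sub_sub_sub_cancel_right] at A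
      have C := HL.contr _ _ _ _ (T2 y) (T2 y') (Y.solL IL (hmem' y hy)) (Y.solL IL (hmem' y' hy'))
        (by simp [Y.fl.zero])
        (by simp only [Y.fl.zero, IL.v0]
            rw [show 1 / α - y1 y - (1 / α - 1 / (α + β)) = -(y1 y - 1 / (α + β)) by ring, abs_neg]
            exact W1.w1.le)
        (by simp [Y.fl.zero])
        (by simp only [Y.fl.zero, IL.v0]
            rw [show 1 / α - y1 y' - (1 / α - 1 / (α + β)) = -(y1 y' - 1 / (α + β)) by ring, abs_neg]
            exact W2.w1.le)
        W1.p2.le (by rw [W1.e2]; ring) (fun t ht => by have := W1.f2 t ht; linarith)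
        W2.p2.le (by rw [W2.e2]; ring) (fun t ht => by have := W2.f2 t ht; linarith)
      simp only [Y.fl.zero, W1.e2, W2.e2] at C
      rw [sub_sub_sub_cancel_left, sub_sub_sub_cancel_left, abs_sub_comm, abs_sub_comm (y1 y')] at C
      have := abs_nonneg (y - y')
      linarith
  obtain ⟨ys, hys, hr, hper, hpos, hO, U, hU, hUs, hUO, hUt⟩ := Q.main Y.fl
  have WS := W ys hys
  refine ⟨Φ (1 + u0, ys), ?_, ?_, ?_, ?_, ?_⟩
  · intro t
    rw [← Y.eq _ (hO t)]
    exact Y.fl.der _ t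
  · exact ⟨T1 ys + T2 ys, by linarith [WS.p1, WS.p2], hper⟩
  · refine ⟨T1 ys, 0, ?_⟩
    rw [WS.e1, Y.fl.zero]
    intro h
    have := congrArg Prod.fst h
    simp only at this
    linarith
  · exact ⟨U, hU, hUs, fun p hp => ⟨Φ p, Y.fl.zero p, fun t ht => Y.der (hUO hp) ht, hUt p hp⟩⟩
  · apply Metric.hausdorffDist_le_of_mem_dist hc.le
    · rintro _ ⟨t, rfl⟩
      obtain ⟨s, hs, hst⟩ := hper.exists_mem_Ico₀ (by linarith [WS.p1, WS.p2]) t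
      rw [hst]
      rcases le_total s (T1 ys) with h | h
      · obtain ⟨τ, hτ, hd⟩ := WS.cR s ⟨hs.1, h⟩
        exact ⟨γR τ, Or.inl (Or.inl ⟨τ, hτ, rfl⟩), hd⟩
      · obtain ⟨τ, hτ, hd⟩ := WS.cL (s - T1 ys) ⟨by linarith, by linarith [hs.2]⟩
        rw [← WS.e1, Y.fl.add, sub_add_cancel] at hd
        exact ⟨γL τ, Or.inl (Or.inr ⟨τ, hτ, rfl⟩), hd⟩
    · have hR : ∀ τ, 0 ≤ τ → ∃ y ∈ range (Φ (1 + u0, ys)), dist (γR τ) y ≤ c := by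
        intro τ hτ
        obtain ⟨t, ht, hd⟩ := WS.cR' τ hτ
        exact ⟨_, ⟨t, rfl⟩, hd⟩
      have hL : ∀ τ, 0 ≤ τ → ∃ y ∈ range (Φ (1 + u0, ys)), dist (γL τ) y ≤ c := by
        intro τ hτ
        obtain ⟨t, ht, hd⟩ := WS.cL' τ hτ
        rw [← WS.e1, Y.fl.add] at hd
        exact ⟨_, ⟨_, rfl⟩, hd⟩
      rintro x ((⟨τ, hτ, rfl⟩ | ⟨τ, hτ, rfl⟩) | (rfl | rfl))
      · exact hR τ hτ
      · exact hL τ hτ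
      · rw [← hγR0]; exact hR 0 le_rfl
      · rw [← hγL0]; exact hL 0 le_rfl

end SDO

namespace SDO
open Set NNReal
lemma main_aux (φ φL φR : ℝ → ℝ) (k : ℕ) (α β : ℝ)
    (hφ : ContDiff ℝ (⊤ : ℕ∞) φ)
    (hφ0 : ∀ z, 0 < φ z) (hφ1 : ∀ z, φ z < 1)
    (hφ' : ∀ z, 0 < deriv φ z)
    (hk : 1 ≤ k)
    (hφL : ContDiff ℝ (⊤ : ℕ∞) φL) (hφR : ContDiff ℝ (⊤ : ℕ∞) φR)
    (hφLnn : ∀ u : ℝ, 0 ≤ u → 0 ≤ φL u) (hφRnn : ∀ u : ℝ, 0 ≤ u → 0 ≤ φR u)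
    (hφL0 : 0 < φL 0) (hφR0 : 0 < φR 0)
    (hAL : ∀ z : ℝ, z < 0 → φ z = ((-z) ^ k)⁻¹ * φL (-z)⁻¹)
    (hAR : ∀ z : ℝ, 0 < z → φ z = 1 - (z ^ k)⁻¹ * φR z⁻¹)
    (hα : 0 < α) (hα1 : α < 1) (hαβ : 1 < α + β)
    (γR γL : ℝ → ℝ × ℝ)
    (hγR0 : γR 0 = (1, 1 / α))
    (hγR : ∀ t, HasDerivAt γR
      ((α + β) * (γR t).2 - (γR t).1, 1 - (α + β) * (γR t).2) t)
    (hγRlim : Tendsto γR atTop (nhds (1, 1 / (α + β))))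
    (hγL0 : γL 0 = (1, 1 / (α + β)))
    (hγL : ∀ t, HasDerivAt γL
      (α * (γL t).2 - (γL t).1, 1 - α * (γL t).2) t)
    (hγLlim : Tendsto γL atTop (nhds (1, 1 / α))) :
    ∃ ηL0 : ℝ, ηL0 < 0 ∧ ∃ ηR0 : ℝ, 0 < ηR0 ∧
      ∀ μ₁ : ℝ, 0 ≤ μ₁ → ∀ η₁ : ℝ,
        ηL0 + μ₁ / α < η₁ → η₁ < ηR0 + μ₁ / (α + β) →
        ∀ c : ℝ, 0 < c →
        ∃ ε₀ > 0, ∀ ε : ℝ, 0 < ε → ε < ε₀ →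
          ∃ sol : ℝ → ℝ × ℝ,
            (∀ t, HasDerivAt sol
              (sdVF φ α β (ε ^ ((k : ℝ) / ((k : ℝ) + 1)) * μ₁)
                (1 + ε ^ ((k : ℝ) / ((k : ℝ) + 1)) * η₁) ε (sol t)) t) ∧
            (∃ T > 0, ∀ t, sol (t + T) = sol t) ∧
            (∃ t s : ℝ, sol t ≠ sol s) ∧
            (∃ U : Set (ℝ × ℝ), IsOpen U ∧ Set.range sol ⊆ U ∧
              ∀ p ∈ U, ∃ ψ : ℝ → ℝ × ℝ, ψ 0 = p ∧
                (∀ t : ℝ, 0 ≤ t → HasDerivAt ψ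
                  (sdVF φ α β (ε ^ ((k : ℝ) / ((k : ℝ) + 1)) * μ₁)
                    (1 + ε ^ ((k : ℝ) / ((k : ℝ) + 1)) * η₁) ε (ψ t)) t) ∧
                Tendsto (fun t => Metric.infDist (ψ t) (Set.range sol))
                  atTop (nhds 0)) ∧
            Metric.hausdorffDist (Set.range sol)
              (γR '' Set.Ici 0 ∪ γL '' Set.Ici 0 ∪ {(1, 1 / α), (1, 1 / (α + β))}) ≤ c := by
  obtain ⟨SR, IR⟩ := exists_right hφ hφ0 hφ1 hφ' hk hφR hφRnn hφR0 hAR hα hα1 hαβ hγR0 hγR hγRlim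
  obtain ⟨SL, IL⟩ := exists_left hφ hφ0 hφ1 hφ' hk hφL hφLnn hφL0 hAL hα hα1 hαβ hγL0 hγL hγLlim
  have hβ : 0 < β := by linarith
  have ha : 0 < α + β := by linarith
  have hv0 : 0 < 1 / α - 1 / (α + β) := by
    have := one_div_lt_one_div_of_lt hα (show α < α + β by linarith)
    linarith
  have key : ∀ S : HS, ∃ r > 0, ∀ ρ, ρ ≤ r → (S.g0 * S.M + 2) * (3 * ρ) ≤ S.c1 * S.ym := by
    intro S
    have h1 := S.hc1
    have h2 := S.hym
    have h3 := S.hg0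
    have h4 : 0 < S.M := by linarith [S.M_pos]
    have hD : 0 < 3 * (S.g0 * S.M + 2) := by positivity
    refine ⟨S.c1 * S.ym / (3 * (S.g0 * S.M + 2)), by positivity, fun ρ hρ => ?_⟩
    rw [le_div_iff₀ hD] at hρ
    linarith
  obtain ⟨r1, hr1, kR⟩ := key SR
  obtain ⟨r2, hr2, kL⟩ := key SL
  obtain ⟨ρ, hρ, hρ6, hρ1, hρ2⟩ : ∃ ρ : ℝ, 0 < ρ ∧ ρ ≤ 1 / 6 ∧ ρ ≤ r1 ∧ ρ ≤ r2 :=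
    ⟨min (1 / 6) (min r1 r2), by positivity, min_le_left _ _,
      (min_le_right _ _).trans (min_le_left _ _), (min_le_right _ _).trans (min_le_right _ _)⟩
  have kR := kR ρ hρ1
  have kL := kL ρ hρ2
  obtain ⟨h, hh, hh1, hh2⟩ : ∃ h : ℝ, 0 < h ∧ h ≤ ρ ∧ 2 * h ≤ ρ * (1 / α - 1 / (α + β)) :=
    ⟨min ρ (ρ * (1 / α - 1 / (α + β)) / 2), by positivity, min_le_left _ _, by
      have := min_le_right ρ (ρ * (1 / α - 1 / (α + β)) / 2); linarith⟩
  refine ⟨-h, by linarith, h, hh, fun μ₁ hμ₁ η₁ hη1 hη2 c hc => ?_⟩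
  have hd : μ₁ / α - μ₁ / (α + β) = μ₁ * (1 / α - 1 / (α + β)) := by ring
  have hd0 : 0 ≤ μ₁ * (1 / α - 1 / (α + β)) := by positivity
  have hμρ : μ₁ ≤ ρ := by
    by_contra! hcon
    have := mul_lt_mul_of_pos_right hcon hv0
    linarith
  have hER : |η₁ - μ₁ / (α + β)| ≤ ρ := by rw [abs_le]; constructor <;> linarith
  have hEL : |η₁ - μ₁ / α| ≤ ρ := by rw [abs_le]; constructor <;> linarith
  have hu1 : ∀ᶠ u0 in 𝓝[>] (0:ℝ), u0 < 1 := nhdsWithin_le_nhds (eventually_lt_nhds one_pos)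
  have hu2 : ∀ᶠ u0 in 𝓝[>] (0:ℝ), 3 * u0 < 1 / (2 * (α + β)) := by
    have : Tendsto (fun u : ℝ => 3 * u) (𝓝[>] 0) (𝓝 (3 * 0)) :=
      (Continuous.tendsto (by fun_prop) 0).mono_left nhdsWithin_le_nhds
    exact this.eventually_lt_const (by rw [mul_zero]; positivity)
  obtain ⟨u0, ⟨⟨⟨⟨eR, eL⟩, h1⟩, h3⟩, h0⟩⟩ := ((((SR.exists_half hc).and (SL.exists_half hc)).and hu1).and hu2 |>.and
    self_mem_nhdsWithin).exists
  have h0 : 0 < u0 := h0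
  have d1 : ∀ᶠ δ in 𝓝[>] (0:ℝ), δ < 1 := hu1
  have d2 : ∀ᶠ δ in 𝓝[>] (0:ℝ), δ < α := nhdsWithin_le_nhds (eventually_lt_nhds hα)
  have d3 : ∀ᶠ δ in 𝓝[>] (0:ℝ), δ < (3 * ρ) ^ k := nhdsWithin_le_nhds (eventually_lt_nhds (by positivity))
  have d4 : ∀ᶠ δ in 𝓝[>] (0:ℝ), 1 + δ * η₁ < 2 := by
    have : Tendsto (fun δ : ℝ => 1 + δ * η₁) (𝓝[>] 0) (𝓝 (1 + 0 * η₁)) :=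
      (Continuous.tendsto (f := fun δ : ℝ => 1 + δ * η₁) (by fun_prop) 0).mono_left nhdsWithin_le_nhds
    exact this.eventually_lt_const (by norm_num)
  have d5 : ∀ᶠ δ in 𝓝[>] (0:ℝ), δ * μ₁ / (2 * (α + β)) + 1 / 2 < 1 + δ * η₁ := by
    have : Tendsto (fun δ : ℝ => 1 + δ * η₁ - (δ * μ₁ / (2 * (α + β)) + 1 / 2)) (𝓝[>] 0)
        (𝓝 (1 + 0 * η₁ - (0 * μ₁ / (2 * (α + β)) + 1 / 2))) :=
      (Continuous.tendsto (f := fun δ : ℝ => 1 + δ * η₁ - (δ * μ₁ / (2 * (α + β)) + 1 / 2))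
        (by fun_prop) 0).mono_left nhdsWithin_le_nhds
    filter_upwards [this.eventually_const_lt (u := 0) (by norm_num)] with δ hδ
    linarith
  have hkp : (0:ℝ) < (k:ℝ) / ((k:ℝ) + 1) := by
    have : (0:ℝ) < k := by exact_mod_cast hk
    positivity
  have ht : Tendsto (fun ε : ℝ => ε ^ ((k:ℝ) / ((k:ℝ) + 1))) (𝓝[>] 0) (𝓝[>] 0) := by
    refine tendsto_nhdsWithin_iff.2 ⟨?_, ?_⟩
    · have := (Real.continuousAt_rpow_const 0 ((k:ℝ) / ((k:ℝ) + 1)) (Or.inr hkp.le)).tendsto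
      rw [Real.zero_rpow hkp.ne'] at this
      exact this.mono_left nhdsWithin_le_nhds
    · filter_upwards [self_mem_nhdsWithin] with ε hε
      exact Real.rpow_pos_of_pos hε _
  have hall := ht.eventually (((((eR.and eL).and d1).and d2).and d3).and (d4.and d5))
  obtain ⟨ε₀, hε₀, hsub⟩ := mem_nhdsGT_iff_exists_Ioo_subset.1 hall
  refine ⟨ε₀, hε₀, fun ε hε hεε => ?_⟩
  obtain ⟨⟨⟨⟨⟨eR, eL⟩, d1⟩, d2⟩, d3⟩, d4, d5⟩ := hsub ⟨hε, hεε⟩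
  have hδ : 0 < ε ^ ((k:ℝ) / ((k:ℝ) + 1)) := Real.rpow_pos_of_pos hε _
  have hpow : ε ^ k = (ε ^ ((k:ℝ) / ((k:ℝ) + 1))) ^ (k + 1) := by
    rw [← Real.rpow_natCast (ε ^ ((k:ℝ) / ((k:ℝ) + 1))), ← Real.rpow_mul hε.le, ← Real.rpow_natCast]
    congr 1
    push_cast
    field_simp
  generalize ε ^ ((k:ℝ) / ((k:ℝ) + 1)) = δ at *
  have hε3 : ε ≤ 3 * ρ * δ := by
    rw [← pow_le_pow_iff_left₀ hε.le (by positivity) (show k ≠ 0 by omega), hpow, pow_succ', mul_pow]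
    gcongr
  have PR : SR.Par ρ δ ε (1 + δ * η₁ - 1 - δ * μ₁ / (α + β)) (δ * μ₁) :=
    { hρ := hρ, hρ6 := hρ6, hρM := kR, hδ := hδ, hδ1 := d1.le, hδg := by rw [IR.g0]; linarith
      hε := hε, hεδ := by rw [IR.k]; exact hpow
      hε3 := hε3
      he0 := by
        rw [show 1 + δ * η₁ - 1 - δ * μ₁ / (α + β) = (η₁ - μ₁ / (α + β)) * δ by ring, abs_mul, abs_of_pos hδ]
        gcongr
      hμ0 := by positivity
      hμ := by rw [mul_comm]; gcongr }
  have PL : SL.Par ρ δ ε (-(1 + δ * η₁ - 1 - δ * μ₁ / α)) (δ * μ₁) :=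
    { hρ := hρ, hρ6 := hρ6, hρM := kL, hδ := hδ, hδ1 := d1.le, hδg := by rw [IL.g0]; linarith
      hε := hε, hεδ := by rw [IL.k]; exact hpow
      hε3 := hε3
      he0 := by
        rw [abs_neg, show 1 + δ * η₁ - 1 - δ * μ₁ / α = (η₁ - μ₁ / α) * δ by ring, abs_mul, abs_of_pos hδ]
        gcongr
      hμ0 := by positivity
      hμ := by rw [mul_comm]; gcongr }
  obtain ⟨TmR, HR⟩ := eR _ _ _ _ PR
  obtain ⟨TmL, HL⟩ := eL _ _ _ _ PL
  obtain ⟨F, K, B, Φ, f1, f2, f3, f4⟩ := exists_sdflow (ε := ε) hφ hφ0 hφ1 hα hβ d4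
    (by positivity : 0 ≤ δ * μ₁) d5
  exact Sys.assemble ⟨f1, f2, f3, f4, hα, hα1, hαβ⟩ IR IL hγR0 hγL0 hc HR HL h0 h1 h3

end SDO

/-- Existence of relaxation oscillations (Theorem 1(b), existence part): there are
heteroclinic values `η^L₀ < 0 < η^R₀` such that for every `μ₁ ≥ 0` and every
`η₁ ∈ (η^L₀ + μ₁/α, η^R₀ + μ₁/(α+β))`, and every `c > 0`, for all sufficiently small
`ε > 0` the system with `η = 1 + ε^{k/(k+1)}η₁`, `μ = ε^{k/(k+1)}μ₁` has an attracting
limit cycle whose image is within Hausdorff distance `c` of the singular cycle `Γ₀`. -/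
theorem existence_of_relaxation_oscillations
    (φ φL φR : ℝ → ℝ) (k : ℕ) (α β : ℝ)
    (hφ : ContDiff ℝ (⊤ : ℕ∞) φ)
    (hφ0 : ∀ z, 0 < φ z) (hφ1 : ∀ z, φ z < 1)
    (hφ' : ∀ z, 0 < deriv φ z)
    (hφtop : Tendsto φ atTop (nhds 1)) (hφbot : Tendsto φ atBot (nhds 0))
    (hk : 1 ≤ k)
    (hφL : ContDiff ℝ (⊤ : ℕ∞) φL) (hφR : ContDiff ℝ (⊤ : ℕ∞) φR)
    (hφLnn : ∀ u : ℝ, 0 ≤ u → 0 ≤ φL u) (hφRnn : ∀ u : ℝ, 0 ≤ u → 0 ≤ φR u)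
    (hφL0 : 0 < φL 0) (hφR0 : 0 < φR 0)
    (hAL : ∀ z : ℝ, z < 0 → φ z = ((-z) ^ k)⁻¹ * φL (-z)⁻¹)
    (hAR : ∀ z : ℝ, 0 < z → φ z = 1 - (z ^ k)⁻¹ * φR z⁻¹)
    (hα : 0 < α) (hα1 : α < 1) (hαβ : 1 < α + β)
    (γR γL : ℝ → ℝ × ℝ)
    (hγR0 : γR 0 = (1, 1 / α))
    (hγR : ∀ t, HasDerivAt γR
      ((α + β) * (γR t).2 - (γR t).1, 1 - (α + β) * (γR t).2) t)
    (hγRlim : Tendsto γR atTop (nhds (1, 1 / (α + β))))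
    (hγL0 : γL 0 = (1, 1 / (α + β)))
    (hγL : ∀ t, HasDerivAt γL
      (α * (γL t).2 - (γL t).1, 1 - α * (γL t).2) t)
    (hγLlim : Tendsto γL atTop (nhds (1, 1 / α))) :
    ∃ ηL0 : ℝ, ηL0 < 0 ∧ ∃ ηR0 : ℝ, 0 < ηR0 ∧
      ∀ μ₁ : ℝ, 0 ≤ μ₁ → ∀ η₁ : ℝ,
        ηL0 + μ₁ / α < η₁ → η₁ < ηR0 + μ₁ / (α + β) →
        ∀ c : ℝ, 0 < c →
        ∃ ε₀ > 0, ∀ ε : ℝ, 0 < ε → ε < ε₀ →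
          ∃ sol : ℝ → ℝ × ℝ,
            (∀ t, HasDerivAt sol
              (sdVF φ α β (ε ^ ((k : ℝ) / ((k : ℝ) + 1)) * μ₁)
                (1 + ε ^ ((k : ℝ) / ((k : ℝ) + 1)) * η₁) ε (sol t)) t) ∧
            (∃ T > 0, ∀ t, sol (t + T) = sol t) ∧
            (∃ t s : ℝ, sol t ≠ sol s) ∧
            (∃ U : Set (ℝ × ℝ), IsOpen U ∧ Set.range sol ⊆ U ∧
              ∀ p ∈ U, ∃ ψ : ℝ → ℝ × ℝ, ψ 0 = p ∧
                (∀ t : ℝ, 0 ≤ t → HasDerivAt ψ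
                  (sdVF φ α β (ε ^ ((k : ℝ) / ((k : ℝ) + 1)) * μ₁)
                    (1 + ε ^ ((k : ℝ) / ((k : ℝ) + 1)) * η₁) ε (ψ t)) t) ∧
                Tendsto (fun t => Metric.infDist (ψ t) (Set.range sol))
                  atTop (nhds 0)) ∧
            Metric.hausdorffDist (Set.range sol)
              (γR '' Set.Ici 0 ∪ γL '' Set.Ici 0 ∪ {(1, 1 / α), (1, 1 / (α + β))}) ≤ c := by
  exact SDO.main_aux φ φL φR k α β hφ hφ0 hφ1 hφ' hk hφL hφR hφLnn hφRnn hφL0 hφR0 hAL hAR hα hα1 hαβ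
    γR γL hγR0 hγR hγRlim hγL0 hγL hγLlim
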